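/- arXiv:0908.4519 — 2 statements merged into one kernel-verified Lean document; each statement's English description precedes it below -/
import Mathlib

section
/- Fix an integer m ≥ 1, a matrix S as below, and an integer ν ≥ 1. There exist a positive integer k_0 and a constant c > 0, depending only on S, m and ν, with the following property. Let p be a prime and let 𝓕 ∈ 𝔉(S,m) over F_p satisfy s_{0,1}·s_{1,2}⋯s_{m−1,m} ≠ 0, with iterated polynomials F_i^{(k)} (obtained by applying the same system 𝓕 at every step). Then for any integer vectors k = (k_1,…,k_ν) and l = (l_1,…,l_ν) with min{k_1,…,k_ν,l_1,…,l_ν} ≥ k_0 whose components are not permutations of each other, and any integer vector a = (a_0,…,a_{m−1}) with gcd(a_0,…,a_{m−1},p) = 1, the polynomial F_{a,k,l} = Σ_{i=0}^{m−1} a_i Σ_{h=1}^{ν} (F_i^{(k_h)} − F_i^{(l_h)}) satisfies |Σ_{w_0,…,w_m=1}^{p} e_p(F_{a,k,l}(w_0,…,w_m))| ≤ c·K^m·p^m, where K = max{k_1,…,k_ν,l_1,…,l_ν}. -/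
open MvPolynomial

/-- Membership of a polynomial system `F = (F_0, …, F_m)` over `R` in the class `𝔉(S,m)`,
where `s i j` records the entries of the upper triangular matrix `S` (for `i < j`). -/
def IsFSystem {R : Type*} [CommRing R] (m : ℕ) (s : ℕ → ℕ → ℕ)
    (F : Fin (m + 1) → MvPolynomial (Fin (m + 1)) R) : Prop :=
  (∃ g h : R, g ≠ 0 ∧
      F (Fin.last m) = MvPolynomial.C g * MvPolynomial.X (Fin.last m) + MvPolynomial.C h) ∧
  ∀ i : Fin (m + 1), (i : ℕ) < m →
    ∃ (G H Gt : MvPolynomial (Fin (m + 1)) R) (g : R),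
      g ≠ 0 ∧
      F i = MvPolynomial.X i * G + H ∧
      (∀ d ∈ G.support, ∀ j : Fin (m + 1), j ≤ i → d j = 0) ∧
      (∀ d ∈ H.support, ∀ j : Fin (m + 1), j ≤ i → d j = 0) ∧
      G = MvPolynomial.C g *
          (∏ j ∈ Finset.univ.filter (fun j : Fin (m + 1) => i < j),
            MvPolynomial.X j ^ s i.val j.val) + Gt ∧
      (∀ d ∈ Gt.support, ∀ j : Fin (m + 1), i < j → d j < s i.val j.val) ∧
      (∀ d ∈ H.support, ∀ j : Fin (m + 1), i < j → d j ≤ s i.val j.val)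

/-- The iterated polynomials `F_i^{(k)}` of a sequence of polynomial systems:
`F_i^{(0)} = X_i` and `F_i^{(k)} = F_{k,i}(F_0^{(k-1)}, …, F_m^{(k-1)})`. -/
noncomputable def iterSys {R : Type*} [CommRing R] (m : ℕ)
    (Fs : ℕ → Fin (m + 1) → MvPolynomial (Fin (m + 1)) R) :
    ℕ → Fin (m + 1) → MvPolynomial (Fin (m + 1)) R
  | 0 => fun i => MvPolynomial.X i
  | k + 1 => fun i => MvPolynomial.bind₁ (iterSys m Fs k) (Fs (k + 1) i)

/-- The additive character `e_p(z) = exp(2πiz/p)` evaluated at an element of `F_p`. -/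
noncomputable def eP (p : ℕ) (x : ZMod p) : ℂ :=
  Complex.exp (2 * Real.pi * Complex.I * (x.val : ℂ) / (p : ℂ))

/-- `e_M(z) = exp(2πiz/M)` for a natural number `z`. -/
noncomputable def eM (M z : ℕ) : ℂ :=
  Complex.exp (2 * Real.pi * Complex.I * (z : ℂ) / (M : ℂ))

/-- The discrepancy of the first `N` points of a sequence in `[0,1)^s`: the supremum over
boxes `B = [a_1,b_1) × ⋯ × [a_s,b_s) ⊆ [0,1)^s` of `|T(B)/N - vol B|`. -/
noncomputable def discrepancy (s N : ℕ) (P : ℕ → Fin s → ℝ) : ℝ :=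
  sSup {D : ℝ | ∃ a b : Fin s → ℝ,
    (∀ j, 0 ≤ a j ∧ a j ≤ b j ∧ b j ≤ 1) ∧
    D = |(((Finset.range N).filter fun n => ∀ j, a j ≤ P n j ∧ P n j < b j).card : ℝ) / N -
        ∏ j, (b j - a j)|}

/-! A greatest exponent of a polynomial (a monomial divisible by all the others) is additive under
products and behaves linearly under substitution. That of `F_i` is row `i` of the unitriangular
matrix `S`, hence that of `F_i^{(k)}` is row `i` of `S^k`. For `i < m` these rows strictly increase
with `k`, hence in a nontrivial linear combination of iterates of `F_i` the largest iterate
survives; its exponent is `1` in `X_i`, `0` in `X_j` for `j < i`, and has total degree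
`O(k^(m-i))`. Let `r` be the first index with `a_r ≠ 0` in `F_p`. Then `Φ = F_{a,k,l}` has degree
exactly `1` in `X_r`, say `Φ = X_r A + B`, and averaging the character sum over translations of
`X_r` leaves only the zeros of `A`, which are counted by the Schwartz–Zippel lemma.

The multiplicities of the iterates in `Φ` are at most `ν` in absolute value, so they can vanish
modulo `p` only if `p ≤ ν`; the trivial bound `p^(m+1) ≤ ν p^m` covers this case. -/

section GreatestExponent

variable {σ τ ι R : Type*} [CommSemiring R] {P Q : MvPolynomial σ R} {d e : σ →₀ ℕ}

/-- The paper's unique leading monomial: `X ^ e` occurs in `P` and is divisible by every monomial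
occurring in `P`. Unlike a leading monomial with respect to a term order, it need not exist, but it
determines the degree of `P` in each variable as well as the total degree. -/
def HasLeadingExponent (P : MvPolynomial σ R) (e : σ →₀ ℕ) : Prop :=
  IsGreatest (P.support : Set (σ →₀ ℕ)) e

theorem hasLeadingExponent_monomial {c : R} (hc : c ≠ 0) :
    HasLeadingExponent (monomial e c) e := by
  classical simp [HasLeadingExponent, support_monomial, hc]

theorem HasLeadingExponent.add_of_lt (hP : HasLeadingExponent P e)
    (hQ : ∀ d ∈ Q.support, d < e) : HasLeadingExponent (P + Q) e := by
  classical
  have hQe : coeff e Q = 0 := notMem_support_iff.1 fun he => (hQ e he).false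
  refine ⟨?_, fun d hd => ?_⟩
  · simpa [hQe] using hP.1
  · exact (Finset.mem_union.1 (support_add hd)).elim (@hP.2 d) fun hd => (hQ d hd).le

theorem HasLeadingExponent.mul [NoZeroDivisors R] (hP : HasLeadingExponent P d)
    (hQ : HasLeadingExponent Q e) : HasLeadingExponent (P * Q) (d + e) := by
  classical
  have hcoeff : coeff (d + e) (P * Q) = coeff d P * coeff e Q := by
    rw [coeff_mul, Finset.sum_eq_single (d, e) _ (by simp)]
    rintro ⟨x, y⟩ hxy hne
    by_contra h
    have hx : x ≤ d := hP.2 (mem_support_iff.2 (left_ne_zero_of_mul h))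
    have hy : y ≤ e := hQ.2 (mem_support_iff.2 (right_ne_zero_of_mul h))
    exact hne (Prod.ext_iff.2 ((add_eq_add_iff_eq_and_eq hx hy).1 (by simpa using hxy)))
  refine ⟨?_, fun x hx => ?_⟩
  · exact mem_support_iff.2 (hcoeff ▸ mul_ne_zero (mem_support_iff.1 hP.1) (mem_support_iff.1 hQ.1))
  · obtain ⟨y, hy, z, hz, rfl⟩ := Finset.mem_add.1 (support_mul P Q hx)
    exact add_le_add (hP.2 hy) (hQ.2 hz)

theorem HasLeadingExponent.C_mul [NoZeroDivisors R] (hP : HasLeadingExponent P e)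
    {c : R} (hc : c ≠ 0) : HasLeadingExponent (C c * P) e := by
  rw [C_apply, ← zero_add e]
  exact (hasLeadingExponent_monomial hc).mul hP

theorem HasLeadingExponent.X_mul_add [NoZeroDivisors R] [Nontrivial R]
    (hP : HasLeadingExponent P e) (hQ : ∀ d ∈ Q.support, d ≤ e) (i : σ) :
    HasLeadingExponent (X i * P + Q) (Finsupp.single i 1 + e) :=
  ((hasLeadingExponent_monomial one_ne_zero).mul hP).add_of_lt fun d hd =>
    (hQ d hd).trans_lt (lt_add_of_pos_left _ (pos_iff_ne_zero.2 (by simp)))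

theorem hasLeadingExponent_prod_pow [NoZeroDivisors R] [Nontrivial R]
    {f : ι → MvPolynomial σ R} {D : ι → σ →₀ ℕ}
    (hf : ∀ i, HasLeadingExponent (f i) (D i)) (s : Finset ι) (n : ι → ℕ) :
    HasLeadingExponent (∏ i ∈ s, f i ^ n i) (∑ i ∈ s, n i • D i) := by
  have hone : HasLeadingExponent (1 : MvPolynomial σ R) 0 :=
    hasLeadingExponent_monomial one_ne_zero
  have hpow (i : ι) (n : ℕ) : HasLeadingExponent (f i ^ n) (n • D i) := by
    induction n with
    | zero => simpa only [pow_zero, zero_smul] using hone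
    | succ n ih => simpa only [pow_succ, succ_nsmul] using ih.mul (hf i)
  classical
  induction s using Finset.induction_on with
  | empty => simpa only [Finset.prod_empty, Finset.sum_empty] using hone
  | insert i s hi ih =>
    simpa only [Finset.prod_insert hi, Finset.sum_insert hi] using
      (hpow i (n i)).mul ih

theorem linearCombination_nat_strictMono {D : τ → σ →₀ ℕ} (hD : ∀ i, D i ≠ 0) :
    StrictMono (Finsupp.linearCombination ℕ D) := by
  intro d e hde
  obtain ⟨c, rfl⟩ := exists_add_of_le hde.le
  obtain ⟨i, hi⟩ : ∃ i, c i ≠ 0 := DFunLike.ne_iff.1 (by simpa using hde.ne')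
  rw [map_add]
  refine lt_add_of_pos_right _ (pos_iff_ne_zero.2 fun h => ?_)
  rw [Finsupp.linearCombination_apply, Finsupp.sum, Finset.sum_eq_zero_iff] at h
  exact smul_ne_zero hi (hD i) (h i (Finsupp.mem_support_iff.2 hi))

theorem hasLeadingExponent_bind₁ [NoZeroDivisors R] [Nontrivial R] {P : MvPolynomial τ R}
    {e : τ →₀ ℕ} (hP : HasLeadingExponent P e)
    {f : τ → MvPolynomial σ R} {D : τ → σ →₀ ℕ} (hD : ∀ i, D i ≠ 0)
    (hf : ∀ i, HasLeadingExponent (f i) (D i)) :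
    HasLeadingExponent (bind₁ f P) (Finsupp.linearCombination ℕ D e) := by
  classical
  have hterm (d : τ →₀ ℕ) (hd : d ∈ P.support) :
      HasLeadingExponent (bind₁ f (monomial d (coeff d P)))
        (Finsupp.linearCombination ℕ D d) := by
    rw [bind₁_monomial, Finsupp.linearCombination_apply]
    exact (hasLeadingExponent_prod_pow hf _ _).C_mul (mem_support_iff.1 hd)
  rw [P.as_sum, map_sum, ← Finset.add_sum_erase _ _ hP.1]
  refine (hterm e hP.1).add_of_lt fun x hx => ?_
  obtain ⟨d, hd, hxd⟩ := Finset.mem_biUnion.1 (support_sum hx)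
  obtain ⟨hne, hd⟩ := Finset.mem_erase.1 hd
  exact ((hterm d hd).2 hxd).trans_lt
    (linearCombination_nat_strictMono hD (lt_of_le_of_ne (hP.2 hd) hne))

theorem exists_hasLeadingExponent_linearCombination [NoZeroDivisors R] [LinearOrder ι]
    {f : ι → MvPolynomial σ R} {D : ι → σ →₀ ℕ} (hD : StrictMono D)
    (hf : ∀ n, HasLeadingExponent (f n) (D n)) {c : ι →₀ R} (hc : c ≠ 0) :
    ∃ n, HasLeadingExponent (Finsupp.linearCombination R f c) (D n) := by
  classical
  have hne := Finsupp.support_nonempty_iff.2 hc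
  set n := c.support.max' hne
  have hn : n ∈ c.support := c.support.max'_mem hne
  refine ⟨n, ?_⟩
  rw [Finsupp.linearCombination_apply, Finsupp.sum, ← Finset.add_sum_erase _ _ hn, smul_eq_C_mul]
  refine ((hf n).C_mul (Finsupp.mem_support_iff.1 hn)).add_of_lt fun x hx => ?_
  obtain ⟨k, hk, hxk⟩ := Finset.mem_biUnion.1 (support_sum hx)
  exact ((hf k).2 (support_smul hxk)).trans_lt (hD (c.support.lt_max'_of_mem_erase_max' hne hk))

theorem HasLeadingExponent.degreeOf_eq (hP : HasLeadingExponent P e) (i : σ) :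
    degreeOf i P = e i := by
  rw [degreeOf_eq_sup]
  exact le_antisymm (Finset.sup_le fun d hd => hP.2 hd i)
    (Finset.le_sup (f := fun d : σ →₀ ℕ => d i) hP.1)

theorem HasLeadingExponent.totalDegree_eq (hP : HasLeadingExponent P e) :
    P.totalDegree = e.degree := by
  exact le_antisymm (Finset.sup_le fun d hd => Finsupp.degree_mono (hP.2 hd)) (le_totalDegree hP.1)

end GreatestExponent

section LinearVariable

variable {σ R : Type*} [CommRing R]

theorem exists_eq_X_mul_add_of_degreeOf_eq_one {P : MvPolynomial σ R} {r : σ}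
    (hP : degreeOf r P = 1) :
    ∃ A B : MvPolynomial σ R, P = X r * A + B ∧ degreeOf r A = 0 ∧ degreeOf r B = 0 ∧ A ≠ 0 ∧
      A.totalDegree ≤ P.totalDegree := by
  have hle : ∀ d ∈ P.support, d r ≤ 1 := degreeOf_le_iff.1 hP.le
  have hdecomp : P = X r * P.divMonomial (Finsupp.single r 1) +
      P.modMonomial (Finsupp.single r 1) :=
    (divMonomial_add_modMonomial_single P r).symm
  have hB : degreeOf r (P.modMonomial (Finsupp.single r 1)) = 0 := by
    refine Nat.le_zero.1 (degreeOf_le_iff.2 fun d hd => ?_)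
    by_contra hdr
    refine mem_support_iff.1 hd (coeff_modMonomial_of_le _ ?_)
    simpa [Nat.one_le_iff_ne_zero] using hdr
  have hcoeff (d : σ →₀ ℕ) (hd : d ∈ (P.divMonomial (Finsupp.single r 1)).support) :
      Finsupp.single r 1 + d ∈ P.support := by
    simpa only [mem_support_iff, coeff_divMonomial] using hd
  refine ⟨_, _, hdecomp, ?_, hB, fun hA => ?_, ?_⟩
  · refine Nat.le_zero.1 (degreeOf_le_iff.2 fun d hd => ?_)
    simpa using hle _ (hcoeff d hd)
  · rw [hA, mul_zero, zero_add] at hdecomp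
    rw [hdecomp, hB] at hP
    exact zero_ne_one hP
  · refine Finset.sup_le fun d hd => le_trans ?_ (le_totalDegree (hcoeff d hd))
    exact Finsupp.degree_mono le_add_self

theorem eval_add_single_of_degreeOf_eq_zero [DecidableEq σ] {P : MvPolynomial σ R} {r : σ}
    (hP : degreeOf r P = 0) (w : σ → R) (t : R) : eval (w + Pi.single r t) P = eval w P := by
  refine eval₂_congr _ _ _ fun {i d} hi hd => ?_
  have hdr : d r = 0 := Nat.le_zero.1 (degreeOf_le_iff.1 hP.le d (mem_support_iff.2 hd))
  have hir : i ≠ r := by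
    rintro rfl
    exact Finsupp.mem_support_iff.1 hi hdr
  simp [hir]

end LinearVariable

section CharacterSum

theorem norm_sum_addChar_le_card_of_translate {R V : Type*} [CommRing R] [Finite R]
    [DecidableEq R] [AddGroup V] [Fintype V] {ψ : AddChar R ℂ} (hψ : ψ.IsPrimitive)
    {f q : V → R} {u : R → V} (hf : ∀ w t, f (w + u t) = f w + t * q w) :
    ‖∑ w, ψ (f w)‖ ≤ Fintype.card {w // q w = 0} := by
  cases nonempty_fintype R
  have hR : (Fintype.card R : ℂ) ≠ 0 := Nat.cast_ne_zero.2 Fintype.card_ne_zero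
  have haverage : Fintype.card R * ∑ w, ψ (f w) =
      Fintype.card R * ∑ w with q w = 0, ψ (f w) := by
    calc (Fintype.card R : ℂ) * ∑ w, ψ (f w)
        = ∑ t : R, ∑ w, ψ (f (w + u t)) := by
          have hshift (t : R) : ∑ w, ψ (f (w + u t)) = ∑ w, ψ (f w) :=
            Equiv.sum_comp (Equiv.addRight (u t)) fun w => ψ (f w)
          simp [hshift]
      _ = ∑ w, ψ (f w) * ∑ t : R, ψ (t * q w) := by
          rw [Finset.sum_comm]
          simp only [hf, AddChar.map_add_eq_mul, Finset.mul_sum]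
      _ = Fintype.card R * ∑ w with q w = 0, ψ (f w) := by
          simp only [AddChar.sum_mulShift _ hψ, Finset.sum_filter, Finset.mul_sum]
          refine Finset.sum_congr rfl fun w _ => ?_
          split_ifs <;> simp [mul_comm]
  rw [mul_left_cancel₀ hR haverage, Fintype.card_subtype]
  exact (norm_sum_le _ _).trans_eq (by simp)

theorem card_eval_eq_zero_le {R : Type*} [CommRing R] [IsDomain R] [Fintype R] [DecidableEq R]
    {n : ℕ} {P : MvPolynomial (Fin (n + 1)) R} (hP : P ≠ 0) :
    Fintype.card {w // eval w P = 0} ≤ P.totalDegree * Fintype.card R ^ n := by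
  have hR : (0 : ℚ≥0) < Fintype.card R := Nat.cast_pos.2 Fintype.card_pos
  have hSZ := schwartz_zippel_totalDegree hP Finset.univ
  rw [Finset.card_univ, div_le_div_iff₀ (by positivity) hR, pow_succ, ← mul_assoc,
    mul_le_mul_iff_left₀ hR, Fintype.piFinset_univ, ← Fintype.card_subtype] at hSZ
  exact_mod_cast hSZ

theorem norm_sum_addChar_eval_le_of_degreeOf_eq_one {R : Type*} [CommRing R] [IsDomain R]
    [Fintype R] {ψ : AddChar R ℂ} (hψ : ψ.IsPrimitive) {n : ℕ}
    {P : MvPolynomial (Fin (n + 1)) R} {r : Fin (n + 1)} (hP : degreeOf r P = 1) :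
    ‖∑ w, ψ (eval w P)‖ ≤ P.totalDegree * (Fintype.card R : ℝ) ^ n := by
  classical
  obtain ⟨A, B, hAB, hA, hB, hA0, hdeg⟩ := exists_eq_X_mul_add_of_degreeOf_eq_one hP
  have htranslate (w : Fin (n + 1) → R) (t : R) :
      eval (w + Pi.single r t) P = eval w P + t * eval w A := by
    simp only [hAB, map_add, map_mul, eval_X, Pi.add_apply, Pi.single_eq_same,
      eval_add_single_of_degreeOf_eq_zero hA, eval_add_single_of_degreeOf_eq_zero hB]
    ring
  calc ‖∑ w, ψ (eval w P)‖ ≤ Fintype.card {w // eval w A = 0} :=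
        norm_sum_addChar_le_card_of_translate hψ htranslate
    _ ≤ A.totalDegree * (Fintype.card R : ℝ) ^ n := mod_cast card_eval_eq_zero_le hA0
    _ ≤ P.totalDegree * (Fintype.card R : ℝ) ^ n := by gcongr

end CharacterSum

section Unitriangular

variable {ι : Type*} [Fintype ι] [LinearOrder ι]

theorem pow_succ_apply_of_isUpperTriangular {R : Type*} [Semiring R] {M : Matrix ι ι R}
    (hM : M.IsUpperTriangular) (hdiag : ∀ i, M i i = 1) (k : ℕ) (i j : ι) :
    (M ^ (k + 1)) i j = (M ^ k) i j + ∑ i' with i < i', M i i' * (M ^ k) i' j := by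
  rw [pow_succ', Matrix.mul_apply, ← Finset.add_sum_erase _ _ (Finset.mem_univ i), hdiag, one_mul]
  congr 1
  refine (Finset.sum_subset (fun i' hi' => ?_) fun i' hi' hii' => ?_).symm
  · simpa using (Finset.mem_filter.1 hi').2.ne'
  · have hlt : i' < i := lt_of_le_of_ne (by simpa using hii') (Finset.ne_of_mem_erase hi')
    rw [hM hlt, zero_mul]

theorem pow_apply_self_of_isUpperTriangular {R : Type*} [Semiring R] {M : Matrix ι ι R}
    (hM : M.IsUpperTriangular) (hdiag : ∀ i, M i i = 1) (k : ℕ) (i : ι) : (M ^ k) i i = 1 := by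
  induction k with
  | zero => simp
  | succ k ih =>
    rw [pow_succ_apply_of_isUpperTriangular hM hdiag, ih, Finset.sum_eq_zero, add_zero]
    intro j hj
    rw [hM.pow k (Finset.mem_filter.1 hj).2, mul_zero]

theorem pow_row_strictMono_of_isUpperTriangular {M : Matrix ι ι ℕ} (hM : M.IsUpperTriangular)
    (hdiag : ∀ i, M i i = 1) {i : ι} (hi : ∃ j, i < j ∧ M i j ≠ 0) :
    StrictMono fun k => (M ^ k).row i := by
  obtain ⟨j, hij, hMij⟩ := hi
  refine strictMono_nat_of_lt_succ fun k => Pi.lt_def.2 ⟨fun x => ?_, j, ?_⟩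
  · rw [Matrix.row_apply, Matrix.row_apply, pow_succ_apply_of_isUpperTriangular hM hdiag]
    exact le_self_add
  · rw [Matrix.row_apply, Matrix.row_apply, pow_succ_apply_of_isUpperTriangular hM hdiag]
    refine lt_add_of_pos_right _ (Finset.sum_pos' (fun _ _ => Nat.zero_le _) ⟨j, by simpa, ?_⟩)
    rw [pow_apply_self_of_isUpperTriangular hM hdiag, mul_one]
    exact Nat.pos_of_ne_zero hMij

theorem sum_pow_succ_row_of_isUpperTriangular {R : Type*} [Semiring R] {M : Matrix ι ι R}
    (hM : M.IsUpperTriangular) (hdiag : ∀ i, M i i = 1) (k : ℕ) (i : ι) :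
    ∑ j, (M ^ (k + 1)) i j =
      ∑ j, (M ^ k) i j + ∑ i' with i < i', M i i' * ∑ j, (M ^ k) i' j := by
  simp only [pow_succ_apply_of_isUpperTriangular hM hdiag, Finset.sum_add_distrib, Finset.mul_sum]
  rw [Finset.sum_comm]

theorem sum_pow_row_le_of_isUpperTriangular {n T : ℕ} {M : Matrix (Fin n) (Fin n) ℕ}
    (hM : M.IsUpperTriangular) (hdiag : ∀ i, M i i = 1)
    (hT : ∀ i, ∑ j with i < j, M i j ≤ T) (k : ℕ) (i : Fin n) :
    ∑ j, (M ^ k) i j ≤ (1 + T * k) ^ (i.rev : ℕ) := by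
  induction k generalizing i with
  | zero => simp [Matrix.one_apply]
  | succ k ih =>
    rw [sum_pow_succ_row_of_isUpperTriangular hM hdiag]
    obtain hi | ⟨d, hd⟩ : (i.rev : ℕ) = 0 ∨ ∃ d, (i.rev : ℕ) = d + 1 := by
      cases h : (i.rev : ℕ) <;> simp
    · have hlast : (Finset.univ.filter fun j => i < j) = ∅ := by
        simp only [Finset.filter_eq_empty_iff, Fin.lt_def, Fin.val_rev] at hi ⊢
        omega
      have hk := ih i
      rw [hi, pow_zero] at hk ⊢
      rwa [hlast, Finset.sum_empty, add_zero]
    · have hlater (j : Fin n) (hj : j ∈ Finset.univ.filter fun j => i < j) :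
          M i j * ∑ j', (M ^ k) j j' ≤ M i j * (1 + T * k) ^ d := by
        refine Nat.mul_le_mul_left _ ((ih j).trans (Nat.pow_le_pow_right (by omega) ?_))
        simp only [Finset.mem_filter, Fin.lt_def, Fin.val_rev] at hj hd ⊢
        omega
      have hbase : 1 + T * k + ∑ j with i < j, M i j ≤ 1 + T * (k + 1) := by
        rw [Nat.mul_succ, ← add_assoc]
        exact Nat.add_le_add_left (hT i) _
      calc ∑ j, (M ^ k) i j + ∑ j with i < j, M i j * ∑ j', (M ^ k) j j'
          ≤ (1 + T * k) ^ (d + 1) + ∑ j with i < j, M i j * (1 + T * k) ^ d :=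
            add_le_add (hd ▸ ih i) (Finset.sum_le_sum hlater)
        _ = (1 + T * k) ^ d * (1 + T * k + ∑ j with i < j, M i j) := by
            rw [← Finset.sum_mul]
            ring
        _ ≤ (1 + T * (k + 1)) ^ d * (1 + T * (k + 1)) :=
            Nat.mul_le_mul (Nat.pow_le_pow_left (le_self_add.trans hbase) d) hbase
        _ = (1 + T * (k + 1)) ^ (i.rev : ℕ) := by rw [hd, pow_succ]

end Unitriangular

section IteratedSystem

variable {R : Type*} [CommRing R] {m : ℕ} {s : ℕ → ℕ → ℕ}

/-- The paper's unitriangular matrix `S`, of which `IsFSystem` only records the entries `s i j`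
above the diagonal. Its rows are the leading exponents of a system in `𝔉(S,m)`. -/
def exponentMatrix (m : ℕ) (s : ℕ → ℕ → ℕ) : Matrix (Fin (m + 1)) (Fin (m + 1)) ℕ :=
  Matrix.of fun i j => if i < j then s i j else if i = j then 1 else 0

theorem exponentMatrix_isUpperTriangular : (exponentMatrix m s).IsUpperTriangular :=
  fun i j (hij : j < i) => by simp [exponentMatrix, hij.asymm, hij.ne']

theorem exponentMatrix_apply_self (i : Fin (m + 1)) : exponentMatrix m s i i = 1 := by
  simp [exponentMatrix]

theorem exponentMatrix_apply_of_lt {i j : Fin (m + 1)} (hij : i < j) :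
    exponentMatrix m s i j = s i j := by
  simp [exponentMatrix, hij]

theorem sum_exponentMatrix_le (i : Fin (m + 1)) :
    ∑ j with i < j, exponentMatrix m s i j ≤ ∑ i : Fin (m + 1), ∑ j : Fin (m + 1), s i j := by
  calc ∑ j with i < j, exponentMatrix m s i j
      = ∑ j : Fin (m + 1) with i < j, s i j :=
        Finset.sum_congr rfl fun j hj => exponentMatrix_apply_of_lt (Finset.mem_filter.1 hj).2
    _ ≤ ∑ j : Fin (m + 1), s i j := Finset.sum_le_sum_of_subset (Finset.filter_subset _ _)
    _ ≤ ∑ i : Fin (m + 1), ∑ j : Fin (m + 1), s i j :=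
        Finset.single_le_sum (f := fun i : Fin (m + 1) => ∑ j : Fin (m + 1), s i j)
          (fun _ _ => Nat.zero_le _) (Finset.mem_univ i)

theorem sum_smul_single_filter_lt_apply {ι : Type*} [Fintype ι] [LinearOrder ι] (n : ι → ℕ)
    (i j : ι) :
    (∑ j with i < j, n j • Finsupp.single j 1) j = if i < j then n j else 0 := by
  simp [Finsupp.single_apply]

theorem le_sum_smul_single_of_forall {ι : Type*} [Fintype ι] [LinearOrder ι] {n : ι → ℕ} {i : ι}
    {d : ι →₀ ℕ} (hle : ∀ j ≤ i, d j = 0) (hlt : ∀ j, i < j → d j ≤ n j) :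
    d ≤ ∑ j with i < j, n j • Finsupp.single j 1 := by
  intro j
  rw [sum_smul_single_filter_lt_apply]
  split_ifs with hij
  exacts [hlt j hij, (hle j (not_lt.1 hij)).le]

theorem exponentMatrix_row_eq_single_add (i : Fin (m + 1)) :
    Finsupp.equivFunOnFinite.symm ((exponentMatrix m s).row i) =
      Finsupp.single i 1 + ∑ j with i < j, s i j • Finsupp.single j 1 := by
  ext j
  obtain hij | rfl | hij := lt_trichotomy i j
  · simp [exponentMatrix, Finsupp.single_apply, hij, hij.ne]
  · simp [exponentMatrix, Finsupp.single_apply]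
  · simp [exponentMatrix, Finsupp.single_apply, hij.not_gt, hij.ne']

theorem IsFSystem.hasLeadingExponent [IsDomain R]
    {F : Fin (m + 1) → MvPolynomial (Fin (m + 1)) R} (hF : IsFSystem m s F) (i : Fin (m + 1)) :
    HasLeadingExponent (F i) (Finsupp.equivFunOnFinite.symm ((exponentMatrix m s).row i)) := by
  classical
  rw [exponentMatrix_row_eq_single_add]
  obtain rfl | hi := eq_or_ne i (Fin.last m)
  · obtain ⟨g, h, hg, hFi⟩ := hF.1
    have hempty : (Finset.univ.filter fun j => Fin.last m < j) = ∅ := by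
      simpa using Fin.le_last
    rw [hempty, Finset.sum_empty, hFi, mul_comm]
    exact (hasLeadingExponent_monomial hg).X_mul_add
      (fun d hd => (Finset.mem_singleton.1 (support_monomial_subset hd)).le) _
  · obtain ⟨G, H, Gt, g, hg, hFi, hG₀, hH₀, hG, hGt, hH⟩ := hF.2 i (Fin.val_lt_last hi)
    set e : Fin (m + 1) →₀ ℕ := ∑ j with i < j, s i j • Finsupp.single j 1
    have hprod : HasLeadingExponent (C g * ∏ j with i < j, X j ^ s i j) e :=
      (hasLeadingExponent_prod_pow (fun j => hasLeadingExponent_monomial one_ne_zero) _ _).C_mul hg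
    -- `hGt` does not exclude the variables `X_j` with `j ≤ i`; they are absent from `Gt` because
    -- they are absent from `G` and from the product.
    have hGt_lt (d : Fin (m + 1) →₀ ℕ) (hd : d ∈ Gt.support) : d < e := by
      have hsub : d ∈ (G - C g * ∏ j with i < j, X j ^ s i j).support := by
        rwa [← eq_sub_of_add_eq' hG.symm]
      refine lt_of_le_of_ne ?_ fun hde => ?_
      · exact (Finset.mem_union.1 (support_sub _ _ _ hsub)).elim
          (fun hdG => le_sum_smul_single_of_forall (hG₀ d hdG) fun j hij => (hGt d hd j hij).le)
          (@hprod.2 d)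
      · have hlast := hGt d hd (Fin.last m) (Fin.lt_last_iff_ne_last.2 hi)
        have hval := sum_smul_single_filter_lt_apply (fun j : Fin (m + 1) => s i j) i (Fin.last m)
        rw [if_pos (Fin.lt_last_iff_ne_last.2 hi)] at hval
        exact hlast.ne (hde ▸ hval)
    rw [hFi, hG]
    exact (hprod.add_of_lt hGt_lt).X_mul_add
      (fun d hd => le_sum_smul_single_of_forall (hH₀ d hd) (hH d hd)) i

theorem hasLeadingExponent_iterSys [IsDomain R]
    {Fs : ℕ → Fin (m + 1) → MvPolynomial (Fin (m + 1)) R}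
    {M : Matrix (Fin (m + 1)) (Fin (m + 1)) ℕ} (hM : M.IsUpperTriangular)
    (hdiag : ∀ i, M i i = 1)
    (hFs : ∀ n i, HasLeadingExponent (Fs (n + 1) i) (Finsupp.equivFunOnFinite.symm (M.row i)))
    (k : ℕ) (i : Fin (m + 1)) :
    HasLeadingExponent (iterSys m Fs k i) (Finsupp.equivFunOnFinite.symm ((M ^ k).row i)) := by
  induction k generalizing i with
  | zero =>
    have hrow : Finsupp.equivFunOnFinite.symm ((M ^ 0).row i) = Finsupp.single i 1 := by
      ext j
      simp [Matrix.one_apply, Finsupp.single_apply]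
    rw [hrow]
    exact hasLeadingExponent_monomial one_ne_zero
  | succ k ih =>
    have hrow : Finsupp.equivFunOnFinite.symm ((M ^ (k + 1)).row i) =
        Finsupp.linearCombination ℕ (fun j => Finsupp.equivFunOnFinite.symm ((M ^ k).row j))
          (Finsupp.equivFunOnFinite.symm (M.row i)) := by
      ext j
      simp [pow_succ', Matrix.mul_apply, Finsupp.linearCombination_apply, Finsupp.sum_fintype]
    rw [hrow]
    refine hasLeadingExponent_bind₁ (hFs k i) (fun j hj => ?_) ih
    have hjj := DFunLike.congr_fun hj j
    simp [pow_apply_self_of_isUpperTriangular hM hdiag] at hjj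

end IteratedSystem

section Multiplicity

theorem sum_sub_eq_linearCombination {ι τ R A : Type*} [Fintype ι] [Ring R] [AddCommGroup A]
    [Module R A] (g : τ → A) (k l : ι → τ) :
    ∑ h, (g (k h) - g (l h)) = Finsupp.linearCombination R g
      (∑ h, (Finsupp.single (k h) 1 - Finsupp.single (l h) 1)) := by
  simp

theorem sum_single_sub_single_ne_zero {ι τ R : Type*} [Fintype ι] [Ring R] (p : ℕ)
    [CharP R p] (hp : Fintype.card ι < p) {k l : ι → τ}
    (hkl : ¬ ∃ σ : Equiv.Perm ι, ∀ h, k h = l (σ h)) :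
    ∑ h, (Finsupp.single (k h) (1 : R) - Finsupp.single (l h) 1) ≠ 0 := by
  classical
  refine fun hsum => hkl ?_
  have hcard (n : τ) : Fintype.card {h // k h = n} = Fintype.card {h // l h = n} := by
    have hn := DFunLike.congr_fun hsum n
    simp only [Finsupp.finsetSum_apply, Finsupp.sub_apply, Finsupp.single_apply,
      Finset.sum_sub_distrib, Finset.sum_boole, Finsupp.zero_apply, sub_eq_zero,
      ← Fintype.card_subtype] at hn
    exact CharP.natCast_injOn_Iio R p ((Fintype.card_subtype_le _).trans_lt hp)
      ((Fintype.card_subtype_le _).trans_lt hp) hn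
  let e (n : τ) : {h // k h = n} ≃ {h // l h = n} := Fintype.equivOfCardEq (hcard n)
  exact ⟨Equiv.ofFiberEquiv e, fun h => (Equiv.ofFiberEquiv_map e h).symm⟩

end Multiplicity

section Combination

theorem exists_degreeOf_sum_C_mul_eq_one {R ι σ : Type*} [CommRing R] [IsDomain R]
    [Fintype ι] [LinearOrder ι] {x : ι → σ} {P : ι → MvPolynomial σ R}
    (hP : ∀ i, degreeOf (x i) (P i) = 1)
    (hlt : ∀ i j, i < j → degreeOf (x i) (P j) = 0) {a : ι → R} (ha : a ≠ 0) :
    ∃ r, degreeOf r (∑ i, C (a i) * P i) = 1 := by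
  obtain ⟨r, hr, hmin⟩ := (Set.toFinite {i | a i ≠ 0}).exists_minimal (Function.ne_iff.1 ha)
  have hlead : degreeOf (x r) (C (a r) * P r) = 1 := by
    rw [degreeOf_C_mul _ _ (mem_nonZeroDivisors_of_ne_zero hr), hP]
  have hrest : degreeOf (x r) (∑ i ∈ Finset.univ.erase r, C (a i) * P i) = 0 := by
    refine Nat.le_zero.1 ((degreeOf_sum_le _ _ _).trans (Finset.sup_le fun i hi => ?_))
    obtain h | h := eq_or_ne (a i) 0
    · simp [h]
    · have hri : r < i :=
        lt_of_le_of_ne ((le_total r i).elim id (hmin h)) (Finset.ne_of_mem_erase hi).symm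
      exact (degreeOf_C_mul_le _ _ _).trans (hlt r i hri).le
  refine ⟨x r, ?_⟩
  rw [← Finset.add_sum_erase _ _ (Finset.mem_univ r), degreeOf_add_eq_of_degreeOf_lt, hlead]
  rw [hlead, hrest]
  exact one_pos

variable {R : Type*} [CommRing R] {m : ℕ} {f : ℕ → Fin (m + 1) → MvPolynomial (Fin (m + 1)) R}
  {M : Matrix (Fin (m + 1)) (Fin (m + 1)) ℕ}

theorem exists_degreeOf_sum_C_mul_linearCombination_eq_one [IsDomain R]
    (hM : M.IsUpperTriangular) (hdiag : ∀ i, M i i = 1)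
    (hoff : ∀ i : Fin m, ∃ j, i.castSucc < j ∧ M i.castSucc j ≠ 0)
    (hf : ∀ n i, HasLeadingExponent (f n i) (Finsupp.equivFunOnFinite.symm ((M ^ n).row i)))
    {a : Fin m → R} (ha : a ≠ 0) {c : ℕ →₀ R} (hc : c ≠ 0) :
    ∃ r, degreeOf r (∑ i : Fin m,
      C (a i) * Finsupp.linearCombination R (fun n => f n i.castSucc) c) = 1 := by
  have hlead (i : Fin m) : ∃ n, HasLeadingExponent
      (Finsupp.linearCombination R (fun n => f n i.castSucc) c)
      (Finsupp.equivFunOnFinite.symm ((M ^ n).row i.castSucc)) :=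
    exists_hasLeadingExponent_linearCombination
      (pow_row_strictMono_of_isUpperTriangular hM hdiag (hoff i)) (fun n => hf n i.castSucc) hc
  refine exists_degreeOf_sum_C_mul_eq_one (x := Fin.castSucc) (fun i => ?_) (fun i j hij => ?_) ha
  · obtain ⟨n, hn⟩ := hlead i
    rw [hn.degreeOf_eq]
    exact pow_apply_self_of_isUpperTriangular hM hdiag n _
  · obtain ⟨n, hn⟩ := hlead j
    rw [hn.degreeOf_eq]
    exact hM.pow n (Fin.castSucc_lt_castSucc_iff.2 hij)

theorem totalDegree_sum_C_mul_sum_sub_le {ι : Type*} [Fintype ι] (hM : M.IsUpperTriangular)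
    (hdiag : ∀ i, M i i = 1) {T K : ℕ} (hT : ∀ i, ∑ j with i < j, M i j ≤ T)
    (hf : ∀ n i, HasLeadingExponent (f n i) (Finsupp.equivFunOnFinite.symm ((M ^ n).row i)))
    (a : Fin m → R) {k l : ι → ℕ} (hk : ∀ h, k h ≤ K) (hl : ∀ h, l h ≤ K) :
    (∑ i : Fin m, C (a i) * ∑ h, (f (k h) i.castSucc - f (l h) i.castSucc)).totalDegree ≤
      (1 + T * K) ^ m := by
  have hiterate {n : ℕ} (hn : n ≤ K) (i : Fin m) :
      (f n i.castSucc).totalDegree ≤ (1 + T * K) ^ m := by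
    rw [(hf n _).totalDegree_eq, Finsupp.degree_eq_sum]
    calc ∑ j, (M ^ n) i.castSucc j ≤ (1 + T * n) ^ (i.castSucc.rev : ℕ) :=
          sum_pow_row_le_of_isUpperTriangular hM hdiag hT n _
      _ ≤ (1 + T * n) ^ m := Nat.pow_le_pow_right (by omega) (by simp)
      _ ≤ (1 + T * K) ^ m := by gcongr
  refine totalDegree_finsetSum_le fun i _ => (totalDegree_mul _ _).trans ?_
  rw [totalDegree_C, zero_add]
  exact totalDegree_finsetSum_le fun h _ => (totalDegree_sub _ _).trans
    (max_le (hiterate (hk h) i) (hiterate (hl h) i))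

end Combination

theorem norm_sum_addChar_iterSys_le {m p : ℕ} {s : ℕ → ℕ → ℕ}
    (hs : ∀ i : Fin m, ∃ j : Fin (m + 1), i.castSucc < j ∧ s i j ≠ 0) {R : Type*} [CommRing R]
    [IsDomain R] [Fintype R] [CharP R p] {ψ : AddChar R ℂ} (hψ : ψ.IsPrimitive)
    {Fs : ℕ → Fin (m + 1) → MvPolynomial (Fin (m + 1)) R} (hF : ∀ n, IsFSystem m s (Fs (n + 1)))
    {ι : Type*} [Fintype ι] (hp : Fintype.card ι < p) {k l : ι → ℕ}
    (hkl : ¬ ∃ σ : Equiv.Perm ι, ∀ h, k h = l (σ h)) {K : ℕ} (hk : ∀ h, k h ≤ K)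
    (hl : ∀ h, l h ≤ K) {a : Fin m → R} (ha : a ≠ 0) :
    ‖∑ w : Fin (m + 1) → R, ψ (eval w (∑ i : Fin m, C (a i) *
        ∑ h, (iterSys m Fs (k h) i.castSucc - iterSys m Fs (l h) i.castSucc)))‖ ≤
      (1 + (∑ i : Fin (m + 1), ∑ j : Fin (m + 1), s i j) * K : ℕ) ^ m *
        (Fintype.card R : ℝ) ^ m := by
  have hM : (exponentMatrix m s).IsUpperTriangular := exponentMatrix_isUpperTriangular
  have hlead := hasLeadingExponent_iterSys hM exponentMatrix_apply_self
    fun n => (hF n).hasLeadingExponent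
  have hc := sum_single_sub_single_ne_zero (R := R) p hp hkl
  have hoff (i : Fin m) : ∃ j, i.castSucc < j ∧ exponentMatrix m s i.castSucc j ≠ 0 := by
    obtain ⟨j, hij, hsij⟩ := hs i
    exact ⟨j, hij, by rwa [exponentMatrix_apply_of_lt hij]⟩
  obtain ⟨r, hr⟩ := exists_degreeOf_sum_C_mul_linearCombination_eq_one hM exponentMatrix_apply_self
    hoff hlead ha hc
  simp only [← sum_sub_eq_linearCombination] at hr
  refine (norm_sum_addChar_eval_le_of_degreeOf_eq_one hψ hr).trans ?_
  gcongr
  exact_mod_cast totalDegree_sum_C_mul_sum_sub_le hM exponentMatrix_apply_self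
    sum_exponentMatrix_le hlead a hk hl

theorem norm_sum_addChar_le_card {R V : Type*} [AddCommGroup R] [Finite R] [Fintype V]
    (ψ : AddChar R ℂ) (f : V → R) : ‖∑ w, ψ (f w)‖ ≤ Fintype.card V := by
  refine (norm_sum_le _ _).trans_eq ?_
  simp

theorem one_le_sup_of_not_perm {ι : Type*} [Fintype ι] {k l : ι → ℕ}
    (hkl : ¬ ∃ σ : Equiv.Perm ι, ∀ h, k h = l (σ h)) :
    1 ≤ Finset.univ.sup k ⊔ Finset.univ.sup l := by
  by_contra! hK
  simp only [Nat.lt_one_iff, ← bot_eq_zero', sup_eq_bot_iff, Finset.sup_eq_bot_iff] at hK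
  exact hkl ⟨Equiv.refl ι, fun h => by simp [hK.1 h, hK.2 h]⟩

theorem stmt2_general {m ν f p : ℕ} [Fact p.Prime] {s : ℕ → ℕ → ℕ}
    (hs : ∀ i : Fin m, ∃ j : Fin (m + 1), i.castSucc < j ∧ s i j ≠ 0) {𝔽 : Type*} [Field 𝔽]
    [Fintype 𝔽] (hq : Fintype.card 𝔽 = p ^ f) {ψ : AddChar 𝔽 ℂ} (hψ : ψ.IsPrimitive)
    {Fs : ℕ → Fin (m + 1) → MvPolynomial (Fin (m + 1)) 𝔽} (hF : ∀ n, IsFSystem m s (Fs (n + 1)))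
    {k l : Fin ν → ℕ} (hkl : ¬ ∃ σ : Equiv.Perm (Fin ν), ∀ h, k h = l (σ h))
    {a : Fin m → 𝔽} (ha : a ≠ 0) :
    ‖∑ w : Fin (m + 1) → 𝔽, ψ (eval w (∑ i : Fin m, C (a i) *
        ∑ h, (iterSys m Fs (k h) i.castSucc - iterSys m Fs (l h) i.castSucc)))‖ ≤
      ((ν : ℝ) ^ f + (1 + ∑ i : Fin (m + 1), ∑ j : Fin (m + 1), s i j : ℕ) ^ m) *
        ((Finset.univ.sup k ⊔ Finset.univ.sup l : ℕ) : ℝ) ^ m * (Fintype.card 𝔽 : ℝ) ^ m := by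
  have hK := one_le_sup_of_not_perm hkl
  set K := Finset.univ.sup k ⊔ Finset.univ.sup l
  obtain hpν | hpν := le_or_gt p ν
  · have hq_le : (Fintype.card 𝔽 : ℝ) ≤ (ν : ℝ) ^ f * (K : ℝ) ^ m := by
      rw [hq]
      exact_mod_cast le_mul_of_le_of_one_le (Nat.pow_le_pow_left hpν f) (Nat.one_le_pow m K hK)
    refine (norm_sum_addChar_le_card ψ _).trans ?_
    rw [Fintype.card_fun, Fintype.card_fin, pow_succ', Nat.cast_mul, Nat.cast_pow]
    gcongr
    exact hq_le.trans (by gcongr; exact le_add_of_nonneg_right (by positivity))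
  · have : CharP 𝔽 p := charP_of_card_eq_prime_pow hq
    have hk (h : Fin ν) : k h ≤ K := (Finset.le_sup (Finset.mem_univ h)).trans le_sup_left
    have hl (h : Fin ν) : l h ≤ K := (Finset.le_sup (Finset.mem_univ h)).trans le_sup_right
    have hbase (T : ℕ) : 1 + T * K ≤ (1 + T) * K := by
      rw [add_mul, one_mul]
      exact Nat.add_le_add_right hK _
    refine (norm_sum_addChar_iterSys_le hs hψ hF ((Fintype.card_fin ν).trans_lt hpν)
      hkl hk hl ha).trans ?_
    gcongr
    refine (pow_le_pow_left₀ (by positivity) (Nat.cast_le.2 (hbase _)) m).trans ?_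
    rw [Nat.cast_mul, mul_pow]
    gcongr
    exact le_add_of_nonneg_left (by positivity)

theorem eP_eq_stdAddChar (p : ℕ) [NeZero p] (x : ZMod p) : eP p x = ZMod.stdAddChar x := by
  rw [ZMod.stdAddChar_apply, ZMod.toCircle_apply]
  rfl

theorem intCast_ne_zero_of_gcd_eq_one {p : ℕ} (hp : p ≠ 1) {ι : Type*} [Fintype ι] {a : ι → ℤ}
    (ha : Int.gcd (Finset.univ.gcd a) p = 1) : (fun i => (a i : ZMod p)) ≠ 0 := by
  intro h
  have hdvd : (p : ℤ) ∣ Finset.univ.gcd a :=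
    Finset.dvd_gcd fun i _ => (ZMod.intCast_zmod_eq_zero_iff_dvd _ _).1 (congrFun h i)
  have hone : (p : ℤ) ∣ (1 : ℕ) := ha ▸ Int.dvd_coe_gcd hdvd dvd_rfl
  exact hp (Nat.dvd_one.1 (Int.natCast_dvd_natCast.1 hone))

theorem stmt2 (m ν : ℕ) (hm : 1 ≤ m) (hν : 1 ≤ ν) (s : ℕ → ℕ → ℕ) :
    ∃ (k₀ : ℕ) (c : ℝ), 0 < k₀ ∧ 0 < c ∧
      ∀ (p : ℕ) [Fact p.Prime],
        ∀ F : Fin (m + 1) → MvPolynomial (Fin (m + 1)) (ZMod p),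
          IsFSystem m s F →
          (∏ i ∈ Finset.range m, s i (i + 1)) ≠ 0 →
          ∀ k l : Fin ν → ℕ,
            (∀ h, k₀ ≤ k h) → (∀ h, k₀ ≤ l h) →
            (¬ ∃ σ : Equiv.Perm (Fin ν), ∀ h, k h = l (σ h)) →
            ∀ a : Fin m → ℤ,
              Int.gcd (Finset.univ.gcd a) (p : ℤ) = 1 →
              ‖∑ w : Fin (m + 1) → ZMod p,
                  eP p (MvPolynomial.eval w
                    (∑ i : Fin m, MvPolynomial.C ((a i : ZMod p)) *
                      ∑ h : Fin ν,
                        (iterSys m (fun _ => F) (k h) i.castSucc -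
                          iterSys m (fun _ => F) (l h) i.castSucc)))‖ ≤
                c * ((Finset.univ.sup k ⊔ Finset.univ.sup l : ℕ) : ℝ) ^ m * (p : ℝ) ^ m := by
  refine ⟨1, (ν : ℝ) ^ 1 + (1 + ∑ i : Fin (m + 1), ∑ j : Fin (m + 1), s i j : ℕ) ^ m, one_pos,
    by positivity, fun p _ F hF hs k l _ _ hkl a ha => ?_⟩
  have hs' (i : Fin m) : ∃ j : Fin (m + 1), i.castSucc < j ∧ s i j ≠ 0 :=
    ⟨i.succ, Fin.castSucc_lt_succ, Finset.prod_ne_zero_iff.1 hs i (Finset.mem_range.2 i.isLt)⟩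
  simpa only [eP_eq_stdAddChar, ZMod.card] using
    stmt2_general hs' (by rw [ZMod.card, pow_one]) (ZMod.isPrimitive_stdAddChar p)
      (fun _ => hF) hkl
      (intCast_ne_zero_of_gcd_eq_one (Fact.out : p.Prime).ne_one ha)
end

section
/- (Erdős–Turán–Koksma inequality.) For every integer s ≥ 1 there exists a constant C_s depending only on s such that for any integer H > 1 and any sequence Γ = (γ_{n,1},…,γ_{n,s}), n = 0,…,N−1, of N points in [0,1)^s, the discrepancy Δ(Γ) satisfies Δ(Γ) ≤ C_s·(1/H + (1/N)·Σ_{0 < |h| ≤ H} ∏_{j=1}^{s} (|h_j| + 1)^{−1} · |Σ_{n=0}^{N−1} exp(2πi Σ_{j=1}^{s} h_j γ_{n,j})|), where the outer sum is over all integer vectors h = (h_1,…,h_s) ∈ ℤ^s with 0 < max_{1≤j≤s} |h_j| ≤ H. -/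
open MvPolynomial

/-!
The translates of the Jackson kernel `|D_L|⁴ / const` by the multiples of `1 / (4 L)` form a
partition of unity on the circle. Take those centred in a given interval: inside the interval their
sum falls short of `1` only by the tail of the kernels centred outside, which decays at least
quadratically in the distance to the ends. Reinforcing the kernels with summable weights that are
large near the ends repairs this deficit at a bounded cost in every coefficient and yields a
trigonometric majorant of degree at most `H`, of mean at most `b - a + O(1 / H)` and with
coefficients `O(1 / (|h| + 1))`. The product of such majorants over the coordinates bounds the
number of points in a box from above. For the lower bound, cut each coordinate at the two ends of
the box: the upper bounds for the `3 ^ s` resulting boxes, whose point counts and volumes have known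
totals, leave no room for a large deficit in any one of them.
-/

open scoped FourierTransform

section Fourier

lemma fourierChar_sum {ι : Type*} (S : Finset ι) (f : ι → ℝ) :
    (𝐞 (∑ i ∈ S, f i) : ℂ) = ∏ i ∈ S, (𝐞 (f i) : ℂ) := by
  simp only [Real.fourierChar_apply, ← Complex.exp_sum, ← Finset.sum_mul, ← Complex.ofReal_sum,
    Finset.mul_sum]

lemma fourierChar_add (x y : ℝ) : (𝐞 (x + y) : ℂ) = 𝐞 x * 𝐞 y := by
  rw [AddChar.map_add_eq_mul, Circle.coe_mul]

lemma fourierChar_natCast_mul (n : ℕ) (x : ℝ) : (𝐞 (n * x) : ℂ) = (𝐞 x : ℂ) ^ n := by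
  rw [← nsmul_eq_mul, AddChar.map_nsmul_eq_pow, Circle.coe_pow]

lemma fourierChar_intCast (n : ℤ) : (𝐞 (n : ℝ) : ℂ) = 1 := by
  rw [Real.fourierChar_apply, ← Complex.exp_int_mul_two_pi_mul_I n]
  congr 1
  push_cast
  ring

lemma conj_fourierChar (x : ℝ) : (starRingEnd ℂ) (𝐞 x) = 𝐞 (-x) := by
  rw [AddChar.map_neg_eq_inv, Circle.coe_inv_eq_conj]

lemma norm_fourierChar_sub_one_ge (x : ℝ) :
    4 * ‖(x : UnitAddCircle)‖ ≤ ‖(𝐞 x : ℂ) - 1‖ := by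
  obtain ⟨y, hxy⟩ : ∃ y, y = x - round x := ⟨_, rfl⟩
  have hy : |y| ≤ 1 / 2 := hxy ▸ abs_sub_round x
  have hchar : (𝐞 x : ℂ) = 𝐞 y := by
    rw [← mul_one (𝐞 y : ℂ), ← fourierChar_intCast (round x), ← fourierChar_add, hxy,
      sub_add_cancel]
  have hsin : 2 / Real.pi * |Real.pi * y| ≤ |Real.sin (Real.pi * y)| := by
    refine Real.mul_abs_le_abs_sin ?_
    rw [abs_mul, abs_of_pos Real.pi_pos]
    nlinarith [Real.pi_pos]
  have hnorm : ‖(𝐞 y : ℂ) - 1‖ = 2 * |Real.sin (Real.pi * y)| := by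
    rw [Real.fourierChar_apply, mul_comm, Complex.norm_exp_I_mul_ofReal_sub_one, norm_mul,
      Real.norm_ofNat, Real.norm_eq_abs, mul_assoc, mul_div_cancel_left₀ _ two_ne_zero]
  rw [hchar, hnorm, UnitAddCircle.norm_eq, ← hxy]
  rw [abs_mul, abs_of_pos Real.pi_pos, ← mul_assoc, div_mul_cancel₀ _ Real.pi_ne_zero] at hsin
  linarith

lemma le_norm_coe_unitAddCircle {δ x : ℝ} (h₀ : δ ≤ x) (h₁ : x ≤ 1 - δ) :
    δ ≤ ‖(x : UnitAddCircle)‖ := by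
  rw [UnitAddCircle.norm_eq, le_abs]
  rcases le_or_gt (round x) 0 with h | h
  · have : (round x : ℝ) ≤ 0 := mod_cast h
    left; linarith
  · have : (1 : ℝ) ≤ round x := mod_cast h
    right; linarith

lemma fourierChar_eq_one_iff {x : ℝ} : (𝐞 x : ℂ) = 1 ↔ ∃ n : ℤ, (n : ℝ) = x := by
  refine ⟨fun hx => ?_, ?_⟩
  · have hnorm : ‖(x : UnitAddCircle)‖ ≤ 0 := by
      have := norm_fourierChar_sub_one_ge x
      rw [hx, sub_self, norm_zero] at this
      linarith
    simpa using (AddCircle.coe_eq_zero_iff (1 : ℝ)).mp (norm_le_zero_iff.mp hnorm)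
  · rintro ⟨n, rfl⟩
    exact fourierChar_intCast n

lemma sum_fourierChar_int_mul_div {M : ℕ} {h : ℤ} (hMh : ¬ (M : ℤ) ∣ h) :
    ∑ i ∈ Finset.range M, (𝐞 (h * (i / M)) : ℂ) = 0 := by
  rcases eq_or_ne M 0 with rfl | hM
  · simp
  have hM₀ : (M : ℝ) ≠ 0 := Nat.cast_ne_zero.mpr hM
  have hterm (i : ℕ) : (𝐞 (h * (i / M)) : ℂ) = (𝐞 (h / M) : ℂ) ^ i := by
    rw [← fourierChar_natCast_mul]; congr 2; ring
  have hroot : (𝐞 (h / M) : ℂ) ^ M = 1 := by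
    rw [← fourierChar_natCast_mul, mul_div_cancel₀ _ hM₀, fourierChar_intCast]
  have hne : (𝐞 (h / M) : ℂ) ≠ 1 := by
    rw [ne_eq, fourierChar_eq_one_iff]
    rintro ⟨k, hk⟩
    rw [eq_div_iff hM₀, mul_comm] at hk
    exact hMh ⟨k, by exact_mod_cast hk.symm⟩
  simp only [hterm]
  rw [geom_sum_eq hne, hroot, sub_self, zero_div]

end Fourier

section TrigPoly

/-- The trigonometric polynomial `∑ c h * e(h x)` over `|h| ≤ d`; the values of `c` at frequencies
beyond `d` are ignored. -/
noncomputable def trigPoly (d : ℕ) (c : ℤ → ℂ) (x : ℝ) : ℂ :=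
  ∑ h ∈ Finset.Icc (-(d : ℤ)) d, c h * 𝐞 (h * x)

variable {d M : ℕ} {c : ℤ → ℂ}

lemma sum_mul_trigPoly_sub {κ : Type*} (d : ℕ) (c : ℤ → ℂ) (S : Finset κ) (w : κ → ℂ) (y : κ → ℝ)
    (x : ℝ) :
    ∑ i ∈ S, w i * trigPoly d c (x - y i)
      = trigPoly d (fun h => c h * ∑ i ∈ S, w i * 𝐞 (-(h * y i))) x := by
  simp only [trigPoly, Finset.mul_sum, Finset.sum_mul]
  rw [Finset.sum_comm]
  refine Finset.sum_congr rfl fun h _ => Finset.sum_congr rfl fun i _ => ?_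
  rw [mul_sub, sub_eq_neg_add, fourierChar_add]
  ring

lemma sum_trigPoly_sub_div_mul_fourierChar (hM : 2 * d < M) {h : ℤ}
    (hh : h ∈ Finset.Icc (-(d : ℤ)) d) (x : ℝ) :
    ∑ i ∈ Finset.range M, 𝐞 (h * (i / M)) * trigPoly d c (x - i / M) = M * (c h * 𝐞 (h * x)) := by
  rw [sum_mul_trigPoly_sub d c (Finset.range M) (fun i => 𝐞 (h * (i / M))), trigPoly,
    Finset.sum_eq_single_of_mem h hh]
  · simp only [← fourierChar_add, add_neg_cancel, AddChar.map_zero_eq_one, Circle.coe_one,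
      Finset.sum_const, Finset.card_range, nsmul_eq_mul, mul_one]
    ring
  · intro k hk hne
    have hndvd : ¬ (M : ℤ) ∣ h - k := by
      refine fun hdvd => sub_ne_zero.mpr hne.symm (Int.eq_zero_of_abs_lt_dvd hdvd ?_)
      rw [Finset.mem_Icc] at hh hk
      rw [abs_lt]
      omega
    have horth : ∑ i ∈ Finset.range M, (𝐞 (h * (i / M)) : ℂ) * 𝐞 (-(k * (i / M))) = 0 := by
      rw [← sum_fourierChar_int_mul_div hndvd]
      refine Finset.sum_congr rfl fun i _ => ?_
      rw [← fourierChar_add]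
      push_cast
      congr 2
      ring
    rw [horth, mul_zero, zero_mul]

lemma sum_trigPoly_sub_div (hM : 2 * d < M) (x : ℝ) :
    ∑ i ∈ Finset.range M, trigPoly d c (x - i / M) = M * c 0 := by
  simpa using sum_trigPoly_sub_div_mul_fourierChar (c := c) hM (h := 0) (by simp) x

lemma norm_coeff_le_norm_coeff_zero {f : ℝ → ℝ} (hf : ∀ x, 0 ≤ f x)
    (hfc : ∀ x, (f x : ℂ) = trigPoly d c x) {h : ℤ} (hh : h ∈ Finset.Icc (-(d : ℤ)) d) :
    ‖c h‖ ≤ ‖c 0‖ := by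
  obtain ⟨M, hM⟩ : ∃ M, 2 * d < M := exists_gt _
  have hM₀ : (0 : ℝ) < M := by exact_mod_cast Nat.zero_lt_of_lt hM
  refine le_of_mul_le_mul_left ?_ hM₀
  calc M * ‖c h‖
      = ‖∑ i ∈ Finset.range M, (𝐞 (h * (i / M)) : ℂ) * f (0 - i / M)‖ := by
        simp only [hfc, sum_trigPoly_sub_div_mul_fourierChar hM hh]
        simp
    _ ≤ ∑ i ∈ Finset.range M, f (0 - i / M) := by
        refine (norm_sum_le _ _).trans_eq (Finset.sum_congr rfl fun i _ => ?_)
        rw [norm_mul, Circle.norm_coe, one_mul, Complex.norm_of_nonneg (hf _)]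
    _ = ‖((∑ i ∈ Finset.range M, f (0 - i / M) : ℝ) : ℂ)‖ :=
        (Complex.norm_of_nonneg (Finset.sum_nonneg fun i _ => hf _)).symm
    _ = M * ‖c 0‖ := by
        rw [Complex.ofReal_sum]
        simp only [hfc, sum_trigPoly_sub_div hM]
        simp

/-- The autocorrelation of `a 0, …, a (n - 1)` at lag `h`, which is the `h`-th Fourier coefficient
of `|∑ a p * e(p x)|²`. -/
noncomputable def autocorrelation (n : ℕ) (a : ℕ → ℂ) (h : ℤ) : ℂ :=
  ∑ p ∈ Finset.range n, ∑ q ∈ Finset.range n,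
    if (p : ℤ) - q = h then a p * (starRingEnd ℂ) (a q) else 0

lemma autocorrelation_one_zero (n : ℕ) : autocorrelation n 1 0 = n := by
  simp +contextual [autocorrelation, sub_eq_zero]

lemma normSq_sum_fourierChar {n : ℕ} (hn : n ≤ d + 1) (a : ℕ → ℂ) (x : ℝ) :
    ((‖∑ p ∈ Finset.range n, a p * 𝐞 (p * x)‖ ^ 2 : ℝ) : ℂ)
      = trigPoly d (autocorrelation n a) x := by
  have hexpand : trigPoly d (autocorrelation n a) x
      = ∑ p ∈ Finset.range n, ∑ q ∈ Finset.range n,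
          a p * (starRingEnd ℂ) (a q) * 𝐞 (((p - q : ℤ) : ℝ) * x) := by
    simp only [trigPoly, autocorrelation, Finset.sum_mul]
    rw [Finset.sum_comm]
    refine Finset.sum_congr rfl fun p hp => ?_
    rw [Finset.sum_comm]
    refine Finset.sum_congr rfl fun q hq => ?_
    simp only [ite_mul, zero_mul, Finset.sum_ite_eq]
    rw [if_pos]
    simp only [Finset.mem_range, Finset.mem_Icc] at hp hq ⊢
    omega
  rw [hexpand, Complex.ofReal_pow, ← Complex.mul_conj', map_sum, Finset.sum_mul_sum]
  refine Finset.sum_congr rfl fun p _ => Finset.sum_congr rfl fun q _ => ?_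
  rw [map_mul (starRingEnd ℂ), conj_fourierChar, mul_mul_mul_comm, ← fourierChar_add]
  push_cast
  congr 3
  ring

end TrigPoly

section JacksonKernel

/-- The one-sided Dirichlet sum `∑ e(p x)` over `0 ≤ p < L`, whose modulus is that of the Dirichlet
kernel. -/
noncomputable def dirichletSum (L : ℕ) (x : ℝ) : ℂ := ∑ p ∈ Finset.range L, 𝐞 (p * x)

lemma dirichletSum_zero (L : ℕ) : dirichletSum L 0 = L := by
  simp [dirichletSum]

lemma norm_dirichletSum_le (L : ℕ) (x : ℝ) : ‖dirichletSum L x‖ ≤ L := by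
  calc ‖dirichletSum L x‖ ≤ ∑ p ∈ Finset.range L, ‖(𝐞 (p * x) : ℂ)‖ := norm_sum_le _ _
    _ = L := by simp only [Circle.norm_coe, Finset.sum_const, Finset.card_range, nsmul_one]

lemma norm_coe_mul_norm_dirichletSum_le (L : ℕ) (x : ℝ) :
    2 * ‖(x : UnitAddCircle)‖ * ‖dirichletSum L x‖ ≤ 1 := by
  have hgeom : dirichletSum L x * (𝐞 x - 1) = (𝐞 x : ℂ) ^ L - 1 := by
    simp only [dirichletSum, fourierChar_natCast_mul, geom_sum_mul]
  have hnum : ‖dirichletSum L x‖ * ‖(𝐞 x : ℂ) - 1‖ ≤ 2 := by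
    rw [← norm_mul, hgeom]
    refine (norm_sub_le _ _).trans_eq ?_
    rw [norm_pow, Circle.norm_coe, one_pow, norm_one, one_add_one_eq_two]
  have := mul_le_mul_of_nonneg_left (norm_fourierChar_sub_one_ge x) (norm_nonneg (dirichletSum L x))
  linarith

lemma half_le_norm_dirichletSum {L : ℕ} {x : ℝ} (hx : |x| * L ≤ 1 / 8) :
    (L : ℝ) / 2 ≤ ‖dirichletSum L x‖ := by
  have hterm (p : ℕ) (hp : p ∈ Finset.range L) : (1 / 2 : ℝ) ≤ (𝐞 (p * x) : ℂ).re := by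
    rw [Real.fourierChar_apply, Complex.exp_ofReal_mul_I_re]
    have hpL : (p : ℝ) ≤ L := by exact_mod_cast (Finset.mem_range.mp hp).le
    have hangle : |2 * Real.pi * (p * x)| ≤ 1 := by
      rw [abs_mul, abs_mul (p : ℝ), abs_of_pos Real.two_pi_pos, Nat.abs_cast]
      have : (p : ℝ) * |x| ≤ 1 / 8 := by nlinarith [abs_nonneg x]
      nlinarith [Real.pi_pos, Real.pi_lt_four]
    have hsq := (sq_le_one_iff_abs_le_one _).mpr hangle
    have hcos := Real.one_sub_sq_div_two_le_cos (x := 2 * Real.pi * (p * x))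
    linarith
  calc (L : ℝ) / 2 = ∑ _p ∈ Finset.range L, (1 / 2 : ℝ) := by simp [div_eq_mul_inv]
    _ ≤ (dirichletSum L x).re := by
        rw [dirichletSum, Complex.re_sum]
        exact Finset.sum_le_sum hterm
    _ ≤ ‖dirichletSum L x‖ := Complex.re_le_norm _

lemma sum_norm_dirichletSum_sq {L M : ℕ} (hM : 2 * (L - 1) < M) (x : ℝ) :
    ∑ i ∈ Finset.range M, ‖dirichletSum L (x - i / M)‖ ^ 2 = M * L := by
  have hsq (y : ℝ) :
      ((‖dirichletSum L y‖ ^ 2 : ℝ) : ℂ) = trigPoly (L - 1) (autocorrelation L 1) y := by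
    rw [← normSq_sum_fourierChar (by omega)]
    simp [dirichletSum]
  rw [← Complex.ofReal_inj, Complex.ofReal_sum]
  simp only [hsq, sum_trigPoly_sub_div hM, autocorrelation_one_zero]
  push_cast
  rfl

lemma exists_trigPoly_norm_dirichletSum_pow_four {L d : ℕ} (hd : 2 * (L - 1) ≤ d) :
    ∃ c : ℤ → ℂ, ∀ x, ((‖dirichletSum L x‖ ^ 4 : ℝ) : ℂ) = trigPoly d c x := by
  obtain ⟨P, hP⟩ : ∃ P : Polynomial ℂ, P = (∑ p ∈ Finset.range L, Polynomial.X ^ p) ^ 2 :=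
    ⟨_, rfl⟩
  have hdeg : P.natDegree < d + 1 := by
    have hgeom : (∑ p ∈ Finset.range L, (Polynomial.X : Polynomial ℂ) ^ p).natDegree ≤ L - 1 := by
      refine Polynomial.natDegree_sum_le_of_forall_le _ _ fun p hp => ?_
      rw [Polynomial.natDegree_X_pow]
      exact Nat.le_sub_one_of_lt (Finset.mem_range.mp hp)
    have := hP ▸ Polynomial.natDegree_pow_le_of_le 2 hgeom
    omega
  have heval (x : ℝ) :
      dirichletSum L x ^ 2 = ∑ p ∈ Finset.range (d + 1), P.coeff p * 𝐞 (p * x) := by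
    simp only [dirichletSum, fourierChar_natCast_mul]
    rw [← Polynomial.eval_eq_sum_range' hdeg, hP, Polynomial.eval_pow, Polynomial.eval_geom_sum]
  refine ⟨autocorrelation (d + 1) P.coeff, fun x => ?_⟩
  rw [← normSq_sum_fourierChar le_rfl, ← heval, norm_pow, ← pow_mul]

/-- The normalization of the Jackson kernel: the sum of the fourth powers of the Dirichlet sum over
the `4 * L` equidistant nodes. Their number exceeds twice the degree `2 * (L - 1)`, so summing over
the nodes integrates the fourth power exactly. -/
noncomputable def jacksonMass (L : ℕ) : ℝ :=
  ∑ i ∈ Finset.range (4 * L), ‖dirichletSum L (-(i / (4 * L)))‖ ^ 4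

/-- The Jackson kernel, scaled so that its translates by the multiples of `1 / (4 * L)` form a
partition of unity on the circle (rather than to have integral `1`). -/
noncomputable def jacksonKernel (L : ℕ) (x : ℝ) : ℝ := ‖dirichletSum L x‖ ^ 4 / jacksonMass L

variable {L : ℕ}

lemma pow_four_le_jacksonMass (hL : 0 < L) : (L : ℝ) ^ 4 ≤ jacksonMass L := by
  calc (L : ℝ) ^ 4 = ‖dirichletSum L (-((0 : ℕ) / (4 * L)))‖ ^ 4 := by simp [dirichletSum_zero]
    _ ≤ jacksonMass L :=
        Finset.single_le_sum (f := fun i : ℕ => ‖dirichletSum L (-(i / (4 * L)))‖ ^ 4)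
          (fun i _ => by positivity) (Finset.mem_range.mpr (by omega))

lemma jacksonMass_pos (hL : 0 < L) : 0 < jacksonMass L :=
  lt_of_lt_of_le (by positivity) (pow_four_le_jacksonMass hL)

lemma jacksonMass_le (hL : 0 < L) : jacksonMass L ≤ 4 * (L : ℝ) ^ 4 := by
  have hparseval := sum_norm_dirichletSum_sq (L := L) (M := 4 * L) (by omega) 0
  push_cast [zero_sub] at hparseval
  calc jacksonMass L
      ≤ ∑ i ∈ Finset.range (4 * L), (L : ℝ) ^ 2 * ‖dirichletSum L (-(i / (4 * L)))‖ ^ 2 := by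
        refine Finset.sum_le_sum fun i _ => ?_
        rw [pow_add _ 2 2]
        gcongr
        exact norm_dirichletSum_le L _
    _ = 4 * (L : ℝ) ^ 4 := by rw [← Finset.mul_sum, hparseval]; ring

lemma jacksonKernel_nonneg (L : ℕ) (x : ℝ) : 0 ≤ jacksonKernel L x :=
  div_nonneg (by positivity) (Finset.sum_nonneg fun _ _ => by positivity)

lemma sum_jacksonKernel_sub (hL : 0 < L) (x : ℝ) :
    ∑ i ∈ Finset.range (4 * L), jacksonKernel L (x - i / (4 * L)) = 1 := by
  obtain ⟨c, hc⟩ := exists_trigPoly_norm_dirichletSum_pow_four (L := L) le_rfl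
  have hsum (y : ℝ) :
      ((∑ i ∈ Finset.range (4 * L), ‖dirichletSum L (y - i / (4 * L))‖ ^ 4 : ℝ) : ℂ)
        = (4 * L : ℕ) * c 0 := by
    rw [← sum_trigPoly_sub_div (d := 2 * (L - 1)) (by omega) y, Complex.ofReal_sum]
    simp only [hc]
    push_cast
    rfl
  have hmass : ∑ i ∈ Finset.range (4 * L), ‖dirichletSum L (x - i / (4 * L))‖ ^ 4
      = jacksonMass L := by
    rw [← Complex.ofReal_inj, hsum, ← hsum 0]
    simp only [zero_sub, jacksonMass]
  simp only [jacksonKernel, ← Finset.sum_div, hmass]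
  exact div_self (jacksonMass_pos hL).ne'

lemma exists_trigPoly_jacksonKernel {d : ℕ} (hd : 2 * (L - 1) ≤ d) (hdL : d < 2 * L) :
    ∃ c : ℤ → ℂ, (∀ x, (jacksonKernel L x : ℂ) = trigPoly d c x) ∧
      ∀ h ∈ Finset.Icc (-(d : ℤ)) d, ‖c h‖ ≤ 1 / (4 * L) := by
  obtain ⟨c, hc⟩ := exists_trigPoly_norm_dirichletSum_pow_four hd
  have hL : 0 < L := by omega
  have hK (x : ℝ) :
      (jacksonKernel L x : ℂ) = trigPoly d (fun h => c h / jacksonMass L) x := by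
    simp only [jacksonKernel, trigPoly, Complex.ofReal_div, hc, Finset.sum_div, div_mul_eq_mul_div]
  refine ⟨_, hK, fun h hh => ?_⟩
  refine (norm_coeff_le_norm_coeff_zero (jacksonKernel_nonneg L) hK hh).trans_eq ?_
  have hmean : 4 * (L : ℂ) * (c 0 / jacksonMass L) = 1 := by
    have := sum_trigPoly_sub_div (M := 4 * L) (c := fun h => c h / jacksonMass L)
      (by omega : 2 * d < 4 * L) 0
    push_cast [← hK] at this
    rw [← this, ← Complex.ofReal_one, ← sum_jacksonKernel_sub hL 0]
    push_cast
    rfl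
  rw [eq_one_div_of_mul_eq_one_right hmean]
  simp

lemma jacksonKernel_lower (hL : 0 < L) {x : ℝ} (hx : |x| * L ≤ 1 / 8) :
    1 / 64 ≤ jacksonKernel L x := by
  rw [jacksonKernel, le_div_iff₀ (jacksonMass_pos hL)]
  calc 1 / 64 * jacksonMass L ≤ 1 / 64 * (4 * (L : ℝ) ^ 4) := by gcongr; exact jacksonMass_le hL
    _ = ((L : ℝ) / 2) ^ 4 := by ring
    _ ≤ ‖dirichletSum L x‖ ^ 4 := by gcongr; exact half_le_norm_dirichletSum hx

lemma jacksonKernel_le_of_le_norm (hL : 0 < L) {x δ : ℝ} (hδ : 0 < δ)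
    (hx : δ / (8 * L) ≤ ‖(x : UnitAddCircle)‖) : jacksonKernel L x ≤ 256 / δ ^ 4 := by
  have hL₀ : (0 : ℝ) < L := by exact_mod_cast hL
  have hdirichlet : δ * ‖dirichletSum L x‖ ≤ 4 * L := by
    rw [div_le_iff₀ (by positivity)] at hx
    nlinarith [norm_coe_mul_norm_dirichletSum_le L x, norm_nonneg (dirichletSum L x)]
  rw [jacksonKernel, div_le_div_iff₀ (jacksonMass_pos hL) (by positivity)]
  calc ‖dirichletSum L x‖ ^ 4 * δ ^ 4 = (δ * ‖dirichletSum L x‖) ^ 4 := by ring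
    _ ≤ (4 * (L : ℝ)) ^ 4 := by gcongr
    _ = 256 * (L : ℝ) ^ 4 := by ring
    _ ≤ 256 * jacksonMass L := by gcongr; exact pow_four_le_jacksonMass hL

lemma div_le_norm_coe_sub_div (hL : 0 < L) {x t δ : ℝ} (hx : |x| * L ≤ 1 / 8)
    (ht : δ ≤ 2 * t - 1) (htL : δ ≤ 2 * (4 * L - t) - 1) :
    δ / (8 * L) ≤ ‖((x - t / (4 * L) : ℝ) : UnitAddCircle)‖ := by
  have hL₀ : (0 : ℝ) < L := by exact_mod_cast hL
  obtain ⟨hxl, hxu⟩ := abs_le.mp ((le_div_iff₀ hL₀).mpr hx)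
  have hcell : 1 / 8 / (L : ℝ) = 1 / (8 * L) := by rw [div_div]
  have hnode : t / (4 * L) = 2 * t / (8 * L) := by field_simp; ring
  rw [hcell] at hxl hxu
  rw [← norm_neg, ← AddCircle.coe_neg, neg_sub, hnode]
  refine le_norm_coe_unitAddCircle ?_ ?_
  · have : δ / (8 * L) ≤ (2 * t - 1) / (8 * L) := by gcongr
    rw [sub_div] at this
    linarith
  · have : (2 * t + 1) / (8 * L) ≤ (8 * L - δ) / (8 * (L : ℝ)) := by gcongr; linarith
    rw [add_div, sub_div, div_self (by positivity)] at this
    linarith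

lemma jacksonKernel_sub_div_le (hL : 0 < L) {x : ℝ} (hx : |x| * L ≤ 1 / 8) {t : ℕ} (ht₀ : 0 < t)
    (ht : t < 4 * L) :
    jacksonKernel L (x - t / (4 * L))
      ≤ 256 * (1 / (t : ℝ) ^ 4 + 1 / ((4 * L - t : ℕ) : ℝ) ^ 4) := by
  have ht₁ : (1 : ℝ) ≤ t := by exact_mod_cast ht₀
  have ht₂ : (t : ℝ) + 1 ≤ 4 * L := by exact_mod_cast ht
  have hcast : ((4 * L - t : ℕ) : ℝ) = 4 * L - t := by
    push_cast [Nat.cast_sub ht.le]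
    rfl
  rw [hcast, mul_add, mul_one_div, mul_one_div]
  rcases le_total (t : ℝ) (4 * L - t) with h | h
  · refine (jacksonKernel_le_of_le_norm hL (by linarith)
      (div_le_norm_coe_sub_div hL hx ?_ ?_)).trans
      (le_add_of_nonneg_right (by positivity)) <;> linarith
  · refine (jacksonKernel_le_of_le_norm hL (by linarith)
      (div_le_norm_coe_sub_div hL hx ?_ ?_)).trans
      (le_add_of_nonneg_left (by positivity)) <;> linarith

end JacksonKernel

section ArcMajorant

lemma sum_one_div_sq_le_two {ι : Type*} {S : Finset ι} {f : ι → ℕ} (hf : Set.InjOn f S) :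
    ∑ i ∈ S, 1 / (f i : ℝ) ^ 2 ≤ 2 := by
  rw [← Finset.sum_image (f := fun n : ℕ => 1 / (n : ℝ) ^ 2) hf]
  refine (sum_le_hasSum (S.image f) (fun i _ => by positivity) hasSum_zeta_two).trans ?_
  nlinarith [Real.pi_pos, Real.pi_lt_d2]

lemma sum_one_div_pow_four_le {ι : Type*} {S : Finset ι} {f : ι → ℕ} (hf : Set.InjOn f S) {p : ℕ}
    (hp : 0 < p) (hpf : ∀ i ∈ S, p ≤ f i) :
    ∑ i ∈ S, 1 / (f i : ℝ) ^ 4 ≤ 2 / (p : ℝ) ^ 2 := by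
  calc ∑ i ∈ S, 1 / (f i : ℝ) ^ 4 ≤ ∑ i ∈ S, 1 / (p : ℝ) ^ 2 * (1 / (f i : ℝ) ^ 2) := by
        refine Finset.sum_le_sum fun i hi => ?_
        have : (0 : ℝ) < p := by exact_mod_cast hp
        have hpi : (p : ℝ) ≤ f i := by exact_mod_cast hpf i hi
        rw [pow_add _ 2 2, ← one_div_mul_one_div]
        gcongr
    _ ≤ 1 / (p : ℝ) ^ 2 * 2 := by
        rw [← Finset.mul_sum]
        gcongr
        exact sum_one_div_sq_le_two hf
    _ = 2 / (p : ℝ) ^ 2 := one_div_mul_eq_div _ _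

/-- A summable weight on the nodes `0, …, n - 1` of an arc, large near both of its ends. Up to
a constant it dominates, at the node `i`, the kernels centred outside the arc. The subtraction
`n - i` is only meant for `i < n`. -/
noncomputable def edgeWeight (n i : ℕ) : ℝ :=
  1 / ((i + 1 : ℕ) : ℝ) ^ 2 + 1 / ((n - i : ℕ) : ℝ) ^ 2

lemma edgeWeight_nonneg (n i : ℕ) : 0 ≤ edgeWeight n i := by
  rw [edgeWeight]
  positivity

lemma sum_edgeWeight_le (n : ℕ) : ∑ i ∈ Finset.range n, edgeWeight n i ≤ 4 := by
  simp only [edgeWeight, Finset.sum_add_distrib]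
  have hleft := sum_one_div_sq_le_two (S := Finset.range n) (f := fun i => i + 1)
    fun i _ j _ hij => by simpa using hij
  have hright := sum_one_div_sq_le_two (S := Finset.range n) (f := fun i => n - i)
    fun i hi j hj hij => by simp only [Finset.coe_range, Set.mem_Iio] at hi hj hij; omega
  linarith

/-- A majorant of the arc of the cells around the nodes `i / (4 * L)`, `i < n`: the sum of the
Jackson kernels at these nodes, reinforced near the ends of the arc to make up for the missing
kernels. The constant is `2 ^ 15 = 512 * 64`, where `512` comes from `sum_jacksonKernel_tail_le` and
`1 / 64` from `jacksonKernel_lower`. -/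
noncomputable def arcMajorant (L n : ℕ) (x : ℝ) : ℝ :=
  ∑ i ∈ Finset.range n, (1 + 2 ^ 15 * edgeWeight n i) * jacksonKernel L (x - i / (4 * L))

lemma arcMajorant_nonneg (L n : ℕ) (x : ℝ) : 0 ≤ arcMajorant L n x :=
  Finset.sum_nonneg fun i _ =>
    mul_nonneg (by linarith [edgeWeight_nonneg n i]) (jacksonKernel_nonneg _ _)

variable {L n m : ℕ} {x : ℝ}

lemma sum_jacksonKernel_tail_le (hm : m < n) (hx : |x - m / (4 * L)| * L ≤ 1 / 8) :
    ∑ i ∈ Finset.Ico n (4 * L), jacksonKernel L (x - i / (4 * L)) ≤ 512 * edgeWeight n m := by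
  have hbound (i : ℕ) (hi : i ∈ Finset.Ico n (4 * L)) :
      jacksonKernel L (x - i / (4 * L))
        ≤ 256 * (1 / ((i - m : ℕ) : ℝ) ^ 4 + 1 / ((4 * L - (i - m) : ℕ) : ℝ) ^ 4) := by
    rw [Finset.mem_Ico] at hi
    have hshift : x - i / (4 * L) = x - m / (4 * L) - (i - m : ℕ) / (4 * L) := by
      rw [Nat.cast_sub (by omega)]
      ring
    rw [hshift]
    exact jacksonKernel_sub_div_le (by omega) hx (by omega) (by omega)
  have hright : ∑ i ∈ Finset.Ico n (4 * L), 1 / ((i - m : ℕ) : ℝ) ^ 4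
      ≤ 2 / ((n - m : ℕ) : ℝ) ^ 2 := by
    refine sum_one_div_pow_four_le (f := fun i => i - m) (fun i hi j hj hij => ?_) (by omega)
      fun i hi => ?_
    · simp only [Finset.coe_Ico, Set.mem_Ico] at hi hj hij
      omega
    · rw [Finset.mem_Ico] at hi
      omega
  have hleft : ∑ i ∈ Finset.Ico n (4 * L), 1 / ((4 * L - (i - m) : ℕ) : ℝ) ^ 4
      ≤ 2 / ((m + 1 : ℕ) : ℝ) ^ 2 := by
    refine sum_one_div_pow_four_le (f := fun i => 4 * L - (i - m)) (fun i hi j hj hij => ?_)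
      (by omega) fun i hi => ?_
    · simp only [Finset.coe_Ico, Set.mem_Ico] at hi hj hij
      omega
    · rw [Finset.mem_Ico] at hi
      omega
  refine (Finset.sum_le_sum hbound).trans ?_
  rw [← Finset.mul_sum, Finset.sum_add_distrib, edgeWeight]
  have := div_eq_mul_one_div 2 (((n - m : ℕ) : ℝ) ^ 2)
  have := div_eq_mul_one_div 2 (((m + 1 : ℕ) : ℝ) ^ 2)
  linarith

lemma one_le_arcMajorant (hm : m < n) (hn : n ≤ 4 * L) (hx : |x - m / (4 * L)| * L ≤ 1 / 8) :
    1 ≤ arcMajorant L n x := by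
  have hL : 0 < L := by omega
  have hunity : ∑ i ∈ Finset.range n, jacksonKernel L (x - i / (4 * L))
      + ∑ i ∈ Finset.Ico n (4 * L), jacksonKernel L (x - i / (4 * L)) = 1 := by
    rw [Finset.sum_range_add_sum_Ico _ hn, sum_jacksonKernel_sub hL]
  have htail := sum_jacksonKernel_tail_le hm hx
  have hpeak : edgeWeight n m * (1 / 64)
      ≤ ∑ i ∈ Finset.range n, edgeWeight n i * jacksonKernel L (x - i / (4 * L)) :=
    (mul_le_mul_of_nonneg_left (jacksonKernel_lower hL hx) (edgeWeight_nonneg n m)).trans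
      (Finset.single_le_sum (f := fun i : ℕ => edgeWeight n i * jacksonKernel L (x - i / (4 * L)))
        (fun i _ => mul_nonneg (edgeWeight_nonneg n i) (jacksonKernel_nonneg _ _))
        (Finset.mem_range.mpr hm))
  simp only [arcMajorant, add_mul, one_mul, mul_assoc, Finset.sum_add_distrib, ← Finset.mul_sum]
  linarith

end ArcMajorant

section IcoMajorant

lemma norm_dirichletSum_int_div_mul_le {n M : ℕ} (hn : n ≤ M) {h : ℤ} (hh : 2 * |h| ≤ M) :
    ‖dirichletSum n (-(h / M))‖ * (|(h : ℝ)| + 1) ≤ M := by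
  rcases eq_or_ne h 0 with rfl | hne
  · simpa [dirichletSum_zero] using hn
  have hh₁ : (1 : ℝ) ≤ |(h : ℝ)| := by exact_mod_cast Int.one_le_abs hne
  have hhM : 2 * |(h : ℝ)| ≤ M := by exact_mod_cast hh
  have hM₀ : (0 : ℝ) < M := by linarith
  have hnorm : ‖((-(h / M) : ℝ) : UnitAddCircle)‖ = |(h : ℝ)| / M := by
    have habs : |-((h : ℝ) / M)| = |(h : ℝ)| / M := by rw [abs_neg, abs_div, Nat.abs_cast]
    rw [(AddCircle.norm_coe_eq_abs_iff 1 one_ne_zero).mpr, habs]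
    rw [habs, div_le_div_iff₀ hM₀ two_pos, abs_one]
    linarith
  have hbound := norm_coe_mul_norm_dirichletSum_le n (-(h / M))
  rw [hnorm, mul_div_assoc', div_mul_eq_mul_div, div_le_one hM₀] at hbound
  nlinarith [norm_nonneg (dirichletSum n (-(h / M)))]

lemma norm_sum_edgeWeight_mul_fourierChar_le (n : ℕ) (h : ℤ) (t M : ℝ) :
    ‖∑ i ∈ Finset.range n, ((1 + 2 ^ 15 * edgeWeight n i : ℝ) : ℂ) * 𝐞 (-(h * (t + i / M)))‖
      ≤ ‖dirichletSum n (-(h / M))‖ + 2 ^ 17 := by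
  have hmain : ‖∑ i ∈ Finset.range n, (𝐞 (-(h * (t + i / M))) : ℂ)‖
      = ‖dirichletSum n (-(h / M))‖ := by
    have hfactor : ∑ i ∈ Finset.range n, (𝐞 (-(h * (t + i / M))) : ℂ)
        = 𝐞 (-(h * t)) * dirichletSum n (-(h / M)) := by
      rw [dirichletSum, Finset.mul_sum]
      refine Finset.sum_congr rfl fun i _ => ?_
      rw [← fourierChar_add]
      congr 2
      ring
    rw [hfactor, norm_mul, Circle.norm_coe, one_mul]
  have hedge : ‖∑ i ∈ Finset.range n,
      ((2 ^ 15 * edgeWeight n i : ℝ) : ℂ) * 𝐞 (-(h * (t + i / M)))‖ ≤ 2 ^ 17 := by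
    calc _ ≤ ∑ i ∈ Finset.range n, 2 ^ 15 * edgeWeight n i := by
          refine norm_sum_le_of_le _ fun i _ => ?_
          rw [norm_mul, Circle.norm_coe, mul_one, Complex.norm_of_nonneg]
          exact mul_nonneg (by norm_num) (edgeWeight_nonneg n i)
      _ ≤ 2 ^ 15 * 4 := by
          rw [← Finset.mul_sum]
          gcongr
          exact sum_edgeWeight_le n
      _ = 2 ^ 17 := by norm_num
  simp only [Complex.ofReal_add, Complex.ofReal_one, add_mul, one_mul, Finset.sum_add_distrib]
  exact (norm_add_le _ _).trans (add_le_add hmain.le hedge)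

lemma exists_trigPoly_arcMajorant_sub {L d : ℕ} (hd : 2 * (L - 1) ≤ d) (hdL : d < 2 * L) (n : ℕ)
    (t : ℝ) :
    ∃ c : ℤ → ℂ, (∀ x, (arcMajorant L n (x - t) : ℂ) = trigPoly d c x) ∧
      ∀ h ∈ Finset.Icc (-(d : ℤ)) d,
        ‖c h‖ ≤ (‖dirichletSum n (-(h / (4 * L)))‖ + 2 ^ 17) / (4 * L) := by
  obtain ⟨k, hk, hkL⟩ := exists_trigPoly_jacksonKernel hd hdL
  refine ⟨fun h => k h * ∑ i ∈ Finset.range n,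
    ((1 + 2 ^ 15 * edgeWeight n i : ℝ) : ℂ) * 𝐞 (-(h * (t + i / (4 * L)))), fun x => ?_,
    fun h hh => ?_⟩
  · rw [← sum_mul_trigPoly_sub, arcMajorant, Complex.ofReal_sum]
    simp only [← hk, Complex.ofReal_mul, sub_sub]
  · rw [norm_mul, ← one_div_mul_eq_div]
    gcongr
    · exact hkL h hh
    · exact norm_sum_edgeWeight_mul_fourierChar_le n h t _

/-- `T` is a nonnegative trigonometric polynomial of degree at most `H` with coefficients `c` that
majorizes the indicator of `[a, b)`, with mean at most `C / H` above `b - a` and with coefficients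
decaying as those of an indicator. Only points of `[a, b)` itself, not its translates by integers,
are required to satisfy `1 ≤ T x`. -/
structure IsIcoMajorant (H : ℕ) (C a b : ℝ) (c : ℤ → ℂ) (T : ℝ → ℝ) : Prop where
  eq_trigPoly : ∀ x, (T x : ℂ) = trigPoly H c x
  nonneg : ∀ x, 0 ≤ T x
  one_le : ∀ x ∈ Set.Ico a b, 1 ≤ T x
  norm_coeff_zero_le : ‖c 0‖ ≤ b - a + C / H
  norm_coeff_le : ∀ h ∈ Finset.Icc (-(H : ℤ)) H, ‖c h‖ ≤ C * (|(h : ℝ)| + 1)⁻¹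

lemma ceil_mul_sub_floor_mul_le {a b M : ℝ} (ha : 0 ≤ a) (hab : a ≤ b) (hM : 0 ≤ M) :
    ((⌈b * M⌉₊ - ⌊a * M⌋₊ : ℕ) : ℝ) ≤ (b - a) * M + 2 := by
  have habM : a * M ≤ b * M := mul_le_mul_of_nonneg_right hab hM
  have haM : 0 ≤ a * M := mul_nonneg ha hM
  have hle : ⌊a * M⌋₊ ≤ ⌈b * M⌉₊ := (Nat.floor_le_ceil _).trans (Nat.ceil_le_ceil habM)
  rw [Nat.cast_sub hle]
  linarith [Nat.lt_floor_add_one (a * M), Nat.ceil_lt_add_one (haM.trans habM)]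

lemma ceil_mul_natCast_le {b : ℝ} (hb : b ≤ 1) (M : ℕ) : ⌈b * M⌉₊ ≤ M := by
  rw [Nat.ceil_le]
  exact mul_le_of_le_one_left (by positivity) hb

-- Shifting by half a cell makes every point of a cell lie within `1 / (8 * L)` of its node.
lemma one_le_arcMajorant_sub {L : ℕ} (hL : 0 < L) {a b x : ℝ} (ha : 0 ≤ a) (hb : b ≤ 1)
    (hx : x ∈ Set.Ico a b) :
    1 ≤ arcMajorant L (⌈b * (4 * L)⌉₊ - ⌊a * (4 * L)⌋₊)
      (x - (⌊a * (4 * L)⌋₊ + 1 / 2) / (4 * L)) := by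
  have : (0 : ℝ) < L := by exact_mod_cast hL
  have hax : a * (4 * L) ≤ x * (4 * L) := by gcongr; exact hx.1
  have hx₀ : 0 ≤ x * (4 * L) := mul_nonneg (ha.trans hx.1) (by positivity)
  have hkm : ⌊a * (4 * L)⌋₊ ≤ ⌊x * (4 * L)⌋₊ := Nat.floor_le_floor hax
  have hml : ⌊x * (4 * L)⌋₊ < ⌈b * (4 * L)⌉₊ :=
    Nat.floor_lt_ceil_of_lt_of_pos (by gcongr; exact hx.2)
      (mul_pos ((ha.trans hx.1).trans_lt hx.2) (by positivity))
  have hl : ⌈b * (4 * L)⌉₊ ≤ 4 * L := mod_cast ceil_mul_natCast_le hb (4 * L)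
  refine one_le_arcMajorant (m := ⌊x * (4 * L)⌋₊ - ⌊a * (4 * L)⌋₊) (by omega) (by omega) ?_
  have hcell : (x - (⌊a * (4 * L)⌋₊ + 1 / 2) / (4 * L)
      - (⌊x * (4 * L)⌋₊ - ⌊a * (4 * L)⌋₊ : ℕ) / (4 * L)) * L
        = (x * (4 * L) - ⌊x * (4 * L)⌋₊ - 1 / 2) / 4 := by
    rw [Nat.cast_sub hkm]
    field_simp
    ring
  rw [← Nat.abs_cast L, ← abs_mul, Nat.abs_cast, hcell, abs_le]
  constructor <;> linarith [Nat.floor_le hx₀, Nat.lt_floor_add_one (x * (4 * L))]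

lemma norm_dirichletSum_add_div_le {L n : ℕ} (hn : n ≤ 4 * L) {h : ℤ} (hh : |h| < 2 * L) :
    (‖dirichletSum n (-(h / (4 * L)))‖ + 2 ^ 17) / (4 * L) ≤ 2 ^ 17 * (|(h : ℝ)| + 1)⁻¹ := by
  have : (0 : ℝ) < L := by exact_mod_cast (by have := abs_nonneg h; omega : 0 < L)
  have hhL : |(h : ℝ)| + 1 ≤ 2 * L := by exact_mod_cast hh
  have hdirichlet := norm_dirichletSum_int_div_mul_le hn (by push_cast; omega : 2 * |h| ≤ _)
  push_cast at hdirichlet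
  rw [← div_eq_mul_inv, div_le_div_iff₀ (by positivity) (by positivity), add_mul]
  linarith

theorem exists_isIcoMajorant {H : ℕ} (hH : 0 < H) {a b : ℝ} (ha : 0 ≤ a) (hab : a ≤ b)
    (hb : b ≤ 1) : ∃ c T, IsIcoMajorant H (2 ^ 17) a b c T := by
  obtain ⟨L, hHL, hLH⟩ : ∃ L, 2 * (L - 1) ≤ H ∧ H < 2 * L := ⟨H / 2 + 1, by omega, by omega⟩
  have : (0 : ℝ) < L := by exact_mod_cast (by omega : 0 < L)
  have hH₀ : (0 : ℝ) < H := by exact_mod_cast hH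
  have hHL₁ : (H : ℝ) ≤ 2 * L := by exact_mod_cast hLH.le
  set k := ⌊a * (4 * L)⌋₊
  set n := ⌈b * (4 * L)⌉₊ - k
  have hnL : n ≤ 4 * L :=
    (Nat.sub_le _ _).trans (mod_cast ceil_mul_natCast_le hb (4 * L))
  obtain ⟨c, hc, hcL⟩ := exists_trigPoly_arcMajorant_sub hHL hLH n ((k + 1 / 2) / (4 * L))
  have hmean : ‖c 0‖ ≤ b - a + 2 ^ 17 / H := by
    have hzero := hcL 0 (by simp)
    rw [Int.cast_zero, zero_div, neg_zero, dirichletSum_zero, Complex.norm_natCast] at hzero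
    calc ‖c 0‖ ≤ (n + 2 ^ 17) / (4 * L) := hzero
      _ ≤ ((b - a) * (4 * L) + 2 + 2 ^ 17) / (4 * L) := by
          gcongr
          exact ceil_mul_sub_floor_mul_le ha hab (by positivity)
      _ = b - a + (2 + 2 ^ 17) / (4 * L) := by field_simp; ring
      _ ≤ b - a + 2 ^ 17 / H := by
          gcongr b - a + ?_
          rw [div_le_div_iff₀ (by positivity) hH₀]
          linarith
  refine ⟨c, fun x => arcMajorant L n (x - (k + 1 / 2) / (4 * L)), hc,
    fun x => arcMajorant_nonneg L n _, fun x hx => one_le_arcMajorant_sub (by omega) ha hb hx,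
    hmean, fun h hh => (hcL h hh).trans (norm_dirichletSum_add_div_le hnL ?_)⟩
  have : |h| ≤ H := abs_le.mpr (Finset.mem_Icc.mp hh)
  omega

end IcoMajorant

section ErdosTuranKoksma

variable {ι : Type*} [Fintype ι]

/-- The exponential sum of the first `N` points of `Γ` at the frequency vector `h`. -/
noncomputable def expSum (N : ℕ) (Γ : ℕ → ι → ℝ) (h : ι → ℤ) : ℂ :=
  ∑ n ∈ Finset.range N, 𝐞 (∑ j, h j * Γ n j)

lemma expSum_eq_sum_exp (N : ℕ) (Γ : ℕ → ι → ℝ) (h : ι → ℤ) :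
    expSum N Γ h = ∑ n ∈ Finset.range N,
      Complex.exp (2 * Real.pi * Complex.I * ((∑ j, (h j : ℝ) * Γ n j : ℝ) : ℂ)) := by
  refine Finset.sum_congr rfl fun n _ => ?_
  rw [Real.fourierChar_apply, Complex.ofReal_mul, Complex.ofReal_mul, Complex.ofReal_ofNat,
    mul_right_comm]

/-- The number of the first `N` points of `Γ` in the box `∏ [a j, b j)`, as a real number written in
the product form to which one-dimensional majorants apply. -/
noncomputable def boxCount (N : ℕ) (Γ : ℕ → ι → ℝ) (a b : ι → ℝ) : ℝ :=
  ∑ n ∈ Finset.range N, ∏ j, (Set.Ico (a j) (b j)).indicator 1 (Γ n j)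

lemma boxCount_eq_card_filter (N : ℕ) (Γ : ℕ → ι → ℝ) (a b : ι → ℝ)
    [DecidablePred fun n => ∀ j, a j ≤ Γ n j ∧ Γ n j < b j] :
    boxCount N Γ a b = ((Finset.range N).filter fun n => ∀ j, a j ≤ Γ n j ∧ Γ n j < b j).card := by
  classical
  simp only [boxCount, Set.indicator_apply, Set.mem_Ico, Pi.one_apply, Finset.prod_ite_zero,
    Finset.prod_const_one, Finset.mem_univ, forall_const, Finset.sum_boole]

lemma prod_add_mul_le_prod_add {v : ι → ℝ} (hv₀ : ∀ j, 0 ≤ v j) (hv₁ : ∀ j, v j ≤ 1) {C e : ℝ}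
    (hC : 0 ≤ C) (he₀ : 0 ≤ e) (he₁ : e ≤ 1) :
    ∏ j, (v j + C * e) ≤ ∏ j, v j + ((1 + C) ^ Fintype.card ι - 1) * e := by
  classical
  rw [← Finset.card_univ]
  induction (Finset.univ : Finset ι) using Finset.induction_on with
  | empty => simp
  | insert j S hj ih =>
    rw [Finset.prod_insert hj, Finset.prod_insert hj, Finset.card_insert_of_notMem hj, pow_succ]
    have hprod₁ : ∏ i ∈ S, v i ≤ 1 := Finset.prod_le_one (fun i _ => hv₀ i) fun i _ => hv₁ i
    have hpow : 1 ≤ (1 + C) ^ S.card := one_le_pow₀ (by linarith)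
    have hCe : 0 ≤ C * e := mul_nonneg hC he₀
    set q := ((1 + C) ^ S.card - 1) * e with hq
    have : 0 ≤ q := mul_nonneg (by linarith) he₀
    calc (v j + C * e) * ∏ i ∈ S, (v i + C * e)
        ≤ (v j + C * e) * (∏ i ∈ S, v i + q) := by
          gcongr
          exact add_nonneg (hv₀ j) hCe
      _ = v j * ∏ i ∈ S, v i + (C * e * ∏ i ∈ S, v i + v j * q + C * e * q) := by ring
      _ ≤ v j * ∏ i ∈ S, v i + (C * e * 1 + 1 * q + C * 1 * q) := by
          gcongr
          exact hv₁ j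
      _ = v j * ∏ i ∈ S, v i + ((1 + C) ^ S.card * (1 + C) - 1) * e := by rw [hq]; ring

variable [DecidableEq ι]

lemma sum_prod_trigPoly (H N : ℕ) (c : ι → ℤ → ℂ) (Γ : ℕ → ι → ℝ) :
    ∑ n ∈ Finset.range N, ∏ j, trigPoly H (c j) (Γ n j)
      = ∑ h ∈ Fintype.piFinset fun _ : ι => Finset.Icc (-(H : ℤ)) H,
          (∏ j, c j (h j)) * expSum N Γ h := by
  simp only [trigPoly, Finset.prod_univ_sum, expSum, Finset.mul_sum, fourierChar_sum,
    Finset.prod_mul_distrib]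
  exact Finset.sum_comm

/-- The sum over the nonzero frequency vectors `|h| ≤ H` in the Erdős–Turán–Koksma inequality. -/
noncomputable def weightedExpSum (H N : ℕ) (Γ : ℕ → ι → ℝ) : ℝ :=
  ∑ h ∈ (Fintype.piFinset fun _ : ι => Finset.Icc (-(H : ℤ)) H).filter (· ≠ 0),
    (∏ j, (|(h j : ℝ)| + 1)⁻¹) * ‖expSum N Γ h‖

/-- The right-hand side of the Erdős–Turán–Koksma inequality without its constant. -/
noncomputable def etkBound (H N : ℕ) (Γ : ℕ → ι → ℝ) : ℝ :=
  1 / H + 1 / N * weightedExpSum H N Γ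

lemma weightedExpSum_nonneg (H N : ℕ) (Γ : ℕ → ι → ℝ) : 0 ≤ weightedExpSum H N Γ :=
  Finset.sum_nonneg fun _ _ => mul_nonneg (Finset.prod_nonneg fun _ _ => by positivity)
    (norm_nonneg _)

lemma etkBound_nonneg (H N : ℕ) (Γ : ℕ → ι → ℝ) : 0 ≤ etkBound H N Γ :=
  add_nonneg (by positivity) (mul_nonneg (by positivity) (weightedExpSum_nonneg H N Γ))

variable {H N : ℕ} {Γ : ℕ → ι → ℝ} {a b : ι → ℝ} {C : ℝ}

section Majorant

variable {c : ι → ℤ → ℂ} {T : ι → ℝ → ℝ}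

lemma boxCount_le_sum_norm (hT : ∀ j, IsIcoMajorant H C (a j) (b j) (c j) (T j)) :
    boxCount N Γ a b ≤ ∑ h ∈ Fintype.piFinset fun _ : ι => Finset.Icc (-(H : ℤ)) H,
      ‖(∏ j, c j (h j)) * expSum N Γ h‖ := by
  have hexpand : ((∑ n ∈ Finset.range N, ∏ j, T j (Γ n j) : ℝ) : ℂ)
      = ∑ h ∈ Fintype.piFinset fun _ : ι => Finset.Icc (-(H : ℤ)) H,
          (∏ j, c j (h j)) * expSum N Γ h := by
    rw [← sum_prod_trigPoly]
    push_cast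
    simp only [(hT _).eq_trigPoly]
  calc boxCount N Γ a b ≤ ∑ n ∈ Finset.range N, ∏ j, T j (Γ n j) := by
        refine Finset.sum_le_sum fun n _ => Finset.prod_le_prod
          (fun j _ => Set.indicator_nonneg (fun _ _ => zero_le_one) _) fun j _ => ?_
        exact Set.indicator_le' (f := 1) (hT j).one_le (fun x _ => (hT j).nonneg x) (Γ n j)
    _ ≤ ‖((∑ n ∈ Finset.range N, ∏ j, T j (Γ n j) : ℝ) : ℂ)‖ := by
        rw [Complex.norm_real]
        exact le_abs_self _
    _ ≤ _ := hexpand ▸ norm_sum_le _ _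

lemma boxCount_le_of_isIcoMajorant (hT : ∀ j, IsIcoMajorant H C (a j) (b j) (c j) (T j)) :
    boxCount N Γ a b
      ≤ N * ∏ j, (b j - a j + C / H) + C ^ Fintype.card ι * weightedExpSum H N Γ := by
  have hzero : ‖(∏ j, c j ((0 : ι → ℤ) j)) * expSum N Γ 0‖ ≤ N * ∏ j, (b j - a j + C / H) := by
    have : expSum N Γ 0 = N := by simp [expSum]
    rw [norm_mul, norm_prod, this, Complex.norm_natCast, mul_comm]
    gcongr with j
    exact (hT j).norm_coeff_zero_le
  have hnonzero : ∀ h ∈ (Fintype.piFinset fun _ : ι => Finset.Icc (-(H : ℤ)) H).filter (· ≠ 0),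
      ‖(∏ j, c j (h j)) * expSum N Γ h‖
        ≤ C ^ Fintype.card ι * ((∏ j, (|(h j : ℝ)| + 1)⁻¹) * ‖expSum N Γ h‖) := by
    intro h hh
    have hmem := Fintype.mem_piFinset.mp (Finset.mem_filter.mp hh).1
    rw [norm_mul, norm_prod, ← mul_assoc, ← Finset.card_univ, ← Finset.prod_const,
      ← Finset.prod_mul_distrib]
    gcongr with j
    exact (hT j).norm_coeff_le _ (hmem j)
  refine (boxCount_le_sum_norm hT).trans ?_
  rw [← Finset.add_sum_erase _ _ (by simp : (0 : ι → ℤ) ∈ _), ← Finset.filter_ne',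
    weightedExpSum, Finset.mul_sum]
  exact add_le_add hzero (Finset.sum_le_sum hnonzero)

end Majorant

lemma boxCount_div_le (hH : 0 < H) (hN : 0 < N) (hab : ∀ j, 0 ≤ a j ∧ a j ≤ b j ∧ b j ≤ 1) :
    boxCount N Γ a b / N
      ≤ ∏ j, (b j - a j) + (1 + 2 ^ 17) ^ Fintype.card ι * etkBound H N Γ := by
  choose c T hT using fun j => exists_isIcoMajorant hH (hab j).1 (hab j).2.1 (hab j).2.2
  have hN₀ : (0 : ℝ) < N := by exact_mod_cast hN
  have hW := weightedExpSum_nonneg H N Γ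
  have hprod : ∏ j, (b j - a j + 2 ^ 17 / H)
      ≤ ∏ j, (b j - a j) + ((1 + 2 ^ 17) ^ Fintype.card ι - 1) / H := by
    simpa only [mul_one_div] using prod_add_mul_le_prod_add (e := 1 / (H : ℝ))
      (fun j => sub_nonneg.mpr (hab j).2.1) (fun j => by linarith [hab j]) (by norm_num)
      (by positivity) (div_le_one_of_le₀ (by exact_mod_cast hH) (by positivity))
  have hpow : (2 ^ 17 : ℝ) ^ Fintype.card ι ≤ (1 + 2 ^ 17) ^ Fintype.card ι := by
    gcongr
    norm_num
  calc boxCount N Γ a b / N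
      ≤ (N * ∏ j, (b j - a j + 2 ^ 17 / H)
          + (2 ^ 17) ^ Fintype.card ι * weightedExpSum H N Γ) / N := by
        gcongr
        exact boxCount_le_of_isIcoMajorant hT
    _ = ∏ j, (b j - a j + 2 ^ 17 / H)
          + (2 ^ 17) ^ Fintype.card ι * (1 / N * weightedExpSum H N Γ) := by
        rw [add_div, mul_div_cancel_left₀ _ hN₀.ne']
        ring
    _ ≤ ∏ j, (b j - a j) + ((1 + 2 ^ 17) ^ Fintype.card ι - 1) / H
          + (1 + 2 ^ 17) ^ Fintype.card ι * (1 / N * weightedExpSum H N Γ) := by gcongr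
    _ ≤ ∏ j, (b j - a j) + (1 + 2 ^ 17) ^ Fintype.card ι * etkBound H N Γ := by
        rw [etkBound, mul_add, mul_one_div, sub_div]
        linarith [one_div_nonneg.mpr (Nat.cast_nonneg (α := ℝ) H)]

lemma abs_sub_le_card_mul_of_sum_eq {κ : Type*} [Fintype κ] {f g : κ → ℝ} {R : ℝ}
    (hsum : ∑ k, f k = ∑ k, g k) (hle : ∀ k, f k ≤ g k + R) (k : κ) :
    |f k - g k| ≤ Fintype.card κ * R := by
  have htotal : ∑ i, (g i + R - f i) = Fintype.card κ * R := by
    simp [Finset.sum_sub_distrib, Finset.sum_add_distrib, hsum]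
  have hnonneg (i : κ) : 0 ≤ g i + R - f i := sub_nonneg.mpr (hle i)
  have hk : g k + R - f k ≤ Fintype.card κ * R :=
    htotal ▸ Finset.single_le_sum (f := fun i => g i + R - f i) (fun i _ => hnonneg i)
      (Finset.mem_univ k)
  have hcard : (1 : ℝ) ≤ Fintype.card κ := by exact_mod_cast Fintype.card_pos_iff.mpr ⟨k⟩
  have hR : 0 ≤ R := by
    refine nonneg_of_mul_nonneg_right (b := R) ?_ (zero_lt_one.trans_le hcard)
    exact htotal ▸ Finset.sum_nonneg fun i _ => hnonneg i
  rw [abs_le]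
  constructor <;> nlinarith [hle k]

/-- The left endpoints of the partition `[0, a)`, `[a, b)`, `[b, 1)` of `[0, 1)`. -/
def cutLower (a b : ℝ) : Fin 3 → ℝ := ![0, a, b]

/-- The right endpoints of the partition `[0, a)`, `[a, b)`, `[b, 1)` of `[0, 1)`. -/
def cutUpper (a b : ℝ) : Fin 3 → ℝ := ![a, b, 1]

lemma sum_prod_cutUpper_sub_cutLower (a b : ι → ℝ) :
    ∑ k : ι → Fin 3, ∏ j, (cutUpper (a j) (b j) (k j) - cutLower (a j) (b j) (k j)) = 1 := by
  rw [← Fintype.prod_sum fun j k => cutUpper (a j) (b j) k - cutLower (a j) (b j) k]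
  simp [Fin.sum_univ_three, cutUpper, cutLower]

lemma sum_indicator_Ico_cut {a b x : ℝ} (hab : a ≤ b) (hx : x ∈ Set.Ico (0 : ℝ) 1) :
    ∑ k, (Set.Ico (cutLower a b k) (cutUpper a b k)).indicator (1 : ℝ → ℝ) x = 1 := by
  simp only [Fin.sum_univ_three, cutLower, cutUpper, Set.indicator_apply, Set.mem_Ico,
    Pi.one_apply, Matrix.cons_val]
  obtain ⟨hx₀, hx₁⟩ := hx
  grind

lemma sum_boxCount_cut (hΓ : ∀ n < N, ∀ j, Γ n j ∈ Set.Ico (0 : ℝ) 1) (hab : ∀ j, a j ≤ b j) :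
    ∑ k : ι → Fin 3, boxCount N Γ (fun j => cutLower (a j) (b j) (k j))
      (fun j => cutUpper (a j) (b j) (k j)) = N := by
  simp only [boxCount]
  rw [Finset.sum_comm]
  calc _ = ∑ n ∈ Finset.range N, ∏ j, ∑ k, (Set.Ico (cutLower (a j) (b j) k)
          (cutUpper (a j) (b j) k)).indicator (1 : ℝ → ℝ) (Γ n j) := by
        simp only [Fintype.prod_sum]
    _ = ∑ n ∈ Finset.range N, 1 := Finset.sum_congr rfl fun n hn => Finset.prod_eq_one fun j _ =>
        sum_indicator_Ico_cut (hab j) (hΓ n (Finset.mem_range.mp hn) j)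
    _ = N := by simp

theorem abs_boxCount_div_sub_prod_le (hH : 0 < H) (hN : 0 < N)
    (hΓ : ∀ n < N, ∀ j, Γ n j ∈ Set.Ico (0 : ℝ) 1) (hab : ∀ j, 0 ≤ a j ∧ a j ≤ b j ∧ b j ≤ 1) :
    |boxCount N Γ a b / N - ∏ j, (b j - a j)|
      ≤ (3 * (1 + 2 ^ 17)) ^ Fintype.card ι * etkBound H N Γ := by
  have hcut (k : ι → Fin 3) (j : ι) : 0 ≤ cutLower (a j) (b j) (k j) ∧
      cutLower (a j) (b j) (k j) ≤ cutUpper (a j) (b j) (k j) ∧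
      cutUpper (a j) (b j) (k j) ≤ 1 := by
    obtain ⟨h₀, h₁, h₂⟩ := hab j
    generalize k j = i
    fin_cases i <;> refine ⟨?_, ?_, ?_⟩ <;> simp [cutLower, cutUpper] <;> linarith
  have hsum : ∑ k : ι → Fin 3, boxCount N Γ (fun j => cutLower (a j) (b j) (k j))
      (fun j => cutUpper (a j) (b j) (k j)) / N
        = ∑ k : ι → Fin 3, ∏ j, (cutUpper (a j) (b j) (k j) - cutLower (a j) (b j) (k j)) := by
    rw [← Finset.sum_div, sum_boxCount_cut hΓ fun j => (hab j).2.1,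
      sum_prod_cutUpper_sub_cutLower, div_self (Nat.cast_ne_zero.mpr hN.ne')]
  have hmiddle := abs_sub_le_card_mul_of_sum_eq hsum
    (fun k => boxCount_div_le hH hN (hcut k)) (fun _ => 1)
  simpa [mul_pow, mul_assoc, cutLower, cutUpper] using hmiddle

end ErdosTuranKoksma

theorem stmt13 (s : ℕ) (hs : 1 ≤ s) :
    ∃ C : ℝ, 0 < C ∧
      ∀ (H N : ℕ), 1 < H → 0 < N →
        ∀ Γ : ℕ → Fin s → ℝ,
          (∀ n < N, ∀ j, 0 ≤ Γ n j ∧ Γ n j < 1) →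
          discrepancy s N Γ ≤
            C * (1 / (H : ℝ) +
              (1 / (N : ℝ)) *
                ∑ h ∈ (Fintype.piFinset fun _ : Fin s =>
                      Finset.Icc (-(H : ℤ)) (H : ℤ)).filter (fun h => h ≠ 0),
                  (∏ j, (|(h j : ℝ)| + 1)⁻¹) *
                    ‖∑ n ∈ Finset.range N,
                        Complex.exp (2 * Real.pi * Complex.I *
                          ((∑ j, (h j : ℝ) * Γ n j : ℝ) : ℂ))‖) := by
  refine ⟨(3 * (1 + 2 ^ 17)) ^ s, by positivity, fun H N hH hN Γ hΓ => ?_⟩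
  simp only [← expSum_eq_sum_exp]
  refine Real.sSup_le ?_ (mul_nonneg (by positivity) (etkBound_nonneg H N Γ))
  rintro _ ⟨a, b, hab, rfl⟩
  have hbox := abs_boxCount_div_sub_prod_le (Nat.zero_lt_of_lt hH) hN hΓ hab
  rwa [boxCount_eq_card_filter, Fintype.card_fin] at hbox
end
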